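/- arXiv:2412.16004 — 4 statements merged into one kernel-verified Lean document; each statement's English description precedes it below -/
import Mathlib

section
/- Let n ≥ 2 and R a commutative ring with invertible element q^{1/n}, q := (q^{1/n})^n. Write B_q(M_n) for the covariantized algebra of O_q(M_n), and let d̲_q denote the element of B_q(M_n) corresponding to the quantum determinant d_q ∈ O_q(M_n) under the identity map of the common underlying R-module; d̲_q is central in B_q(M_n). Define O_q(SL_n) := O_q(M_n)/(d_q − 1) and O_q(GL_n) := O_q(M_n)[d_q^{−1}] (localization at the central grouplike element d_q); the standard dual quasitriangular structure of O_q(M_n) descends/extends to these. Then: (1) the covariantized algebra of O_q(SL_n) is isomorphic to the quotient B_q(M_n)/(d̲_q − 1) of B_q(M_n) by the two-sided ideal generated by d̲_q − 1; (2) the covariantized algebra of O_q(GL_n) is isomorphic to B_q(M_n)[t]/(d̲_q ⬝ t − 1), the algebra obtained from B_q(M_n) by adjoining a central element t subject to d̲_q ⬝ t = 1. -/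
open scoped TensorProduct BigOperators

noncomputable section

universe u

/-- Integer power `q^m` of an invertible element `qq` of `R`, as an element of `R`. -/
def qzpow {R : Type u} [CommRing R] (qq : Rˣ) (m : ℤ) : R := ((qq ^ m : Rˣ) : R)

/-- The defining relations of the `q`-matrix bialgebra `O_q(M_n)` for a family
`y i j` (the image of the generator `x^i_j`; the first index is the upper one). -/
def OqMnRels {R : Type u} [CommRing R] {B : Type u} [Ring B] [Algebra R B]
    (n : ℕ) (qq : Rˣ) (y : Fin n → Fin n → B) : Prop :=
  (∀ i j k : Fin n, j < k → y i k * y i j = (qq : R) • (y i j * y i k)) ∧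
  (∀ i j k : Fin n, j < k → y k i * y j i = (qq : R) • (y j i * y k i)) ∧
  (∀ i j k l : Fin n, i < j → k < l → y i l * y j k = y j k * y i l) ∧
  (∀ i j k l : Fin n, i < j → k < l →
    y j l * y i k - y i k * y j l = ((qq : R) - ((qq⁻¹ : Rˣ) : R)) • (y i l * y j k))

/-- `ρ` is a dual quasitriangular structure on the bialgebra `A`.  All conditions
involving the Sweedler components of the comultiplication are expressed by
quantifying over finite representations of `comul`. -/
def IsDQT {R : Type u} [CommRing R] {A : Type u} [Ring A] [Bialgebra R A]
    (ρ : A →ₗ[R] A →ₗ[R] R) : Prop :=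
  (∀ (a b c : A) (s : Finset ℕ) (c1 c2 : ℕ → A),
      Coalgebra.comul (R := R) c = ∑ i ∈ s, c1 i ⊗ₜ[R] c2 i →
      ρ (a * b) c = ∑ i ∈ s, ρ a (c1 i) * ρ b (c2 i)) ∧
  (∀ (a b c : A) (s : Finset ℕ) (a1 a2 : ℕ → A),
      Coalgebra.comul (R := R) a = ∑ i ∈ s, a1 i ⊗ₜ[R] a2 i →
      ρ a (b * c) = ∑ i ∈ s, ρ (a1 i) c * ρ (a2 i) b) ∧
  (∀ a : A, ρ a 1 = Coalgebra.counit (R := R) a) ∧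
  (∀ a : A, ρ 1 a = Coalgebra.counit (R := R) a) ∧
  (∀ (a b : A) (s t : Finset ℕ) (a1 a2 b1 b2 : ℕ → A),
      Coalgebra.comul (R := R) a = ∑ i ∈ s, a1 i ⊗ₜ[R] a2 i →
      Coalgebra.comul (R := R) b = ∑ j ∈ t, b1 j ⊗ₜ[R] b2 j →
      ∑ i ∈ s, ∑ j ∈ t, ρ (a2 i) (b2 j) • (b1 j * a1 i) =
        ∑ i ∈ s, ∑ j ∈ t, ρ (a1 i) (b1 j) • (a2 i * b2 j))

/-- `ρt` is the convolution inverse of `ρ` in `Hom(A ⊗ A^cop, R)`. -/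
def IsCopConvInv {R : Type u} [CommRing R] {A : Type u} [Ring A] [Bialgebra R A]
    (ρ ρt : A →ₗ[R] A →ₗ[R] R) : Prop :=
  ∀ (a b : A) (s t : Finset ℕ) (a1 a2 b1 b2 : ℕ → A),
    Coalgebra.comul (R := R) a = ∑ i ∈ s, a1 i ⊗ₜ[R] a2 i →
    Coalgebra.comul (R := R) b = ∑ j ∈ t, b1 j ⊗ₜ[R] b2 j →
    (∑ i ∈ s, ∑ j ∈ t, ρt (a1 i) (b2 j) * ρ (a2 i) (b1 j)
        = Coalgebra.counit (R := R) a * Coalgebra.counit (R := R) b) ∧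
    (∑ i ∈ s, ∑ j ∈ t, ρ (a1 i) (b2 j) * ρt (a2 i) (b1 j)
        = Coalgebra.counit (R := R) a * Coalgebra.counit (R := R) b)

/-- The twofold comultiplication `a ↦ a₍₁₎ ⊗ (a₍₂₎ ⊗ a₍₃₎)`. -/
def comul2 {R : Type u} [CommRing R] {A : Type u} [Ring A] [Bialgebra R A] :
    A →ₗ[R] A ⊗[R] (A ⊗[R] A) :=
  (TensorProduct.map LinearMap.id (Coalgebra.comul (R := R))).comp (Coalgebra.comul (R := R))

/-- `cmul` is the covariantized (reflection equation) product
`a ⬝ b = a₍₂₎ b₍₃₎ 𝓡̃(a₍₃₎, b₍₁₎) 𝓡(a₍₁₎, b₍₂₎)` built from `ρ` and its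
convolution inverse `ρt` in `Hom(A ⊗ A^cop, R)`, expressed via finite
representations of the iterated comultiplication. -/
def CovChar {R : Type u} [CommRing R] {A : Type u} [Ring A] [Bialgebra R A]
    (ρ ρt : A →ₗ[R] A →ₗ[R] R) (cmul : A → A → A) : Prop :=
  ∀ (a b : A) (s t : Finset ℕ) (a1 a2 a3 b1 b2 b3 : ℕ → A),
    comul2 (R := R) a = ∑ i ∈ s, a1 i ⊗ₜ[R] (a2 i ⊗ₜ[R] a3 i) →
    comul2 (R := R) b = ∑ j ∈ t, b1 j ⊗ₜ[R] (b2 j ⊗ₜ[R] b3 j) →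
    cmul a b = ∑ i ∈ s, ∑ j ∈ t, (ρt (a3 i) (b1 j) * ρ (a1 i) (b2 j)) • (a2 i * b3 j)

/-- The value `𝓡(x^i_j, x^k_l)` of the standard dual quasitriangular structure of
`O_q(M_n)`, where `qr = q^{1/n}` is the chosen `n`-th root of `q = qr^n`:
`𝓡(x^i_j, x^k_l) = q^{−1/n} (δ^i_j δ^k_l q^{δ^j_l} + (q − q^{−1}) δ_{j>l} δ^i_l δ^k_j)`. -/
def RmatVal {R : Type u} [CommRing R] (n : ℕ) (qr : Rˣ) (i j k l : Fin n) : R :=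
  ((qr⁻¹ : Rˣ) : R) *
    ((if i = j then 1 else 0) * (if k = l then 1 else 0) *
        (if j = l then ((qr ^ n : Rˣ) : R) else 1)
      + (((qr ^ n : Rˣ) : R) - (((qr ^ n)⁻¹ : Rˣ) : R)) * (if l < j then 1 else 0) *
          (if i = l then 1 else 0) * (if k = j then 1 else 0))

/-- Product of a nonempty list under a binary operation, bracketed to the right. -/
def cchain {A : Type u} (cmul : A → A → A) : A → List A → A
  | a, [] => a
  | a, b :: l => cmul a (cchain cmul b l)

/-- Product of a list under the binary operation `cmul`, equal to `one` on the empty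
list (and not otherwise using `one`). -/
def cListProd {A : Type u} (cmul : A → A → A) (one : A) : List A → A
  | [] => one
  | a :: l => cchain cmul a l

/-- `N`-th power with respect to the binary operation `cmul`. -/
def cpow {A : Type u} (cmul : A → A → A) (one : A) (a : A) (N : ℕ) : A :=
  cListProd cmul one (List.replicate N a)

/-- The number `l(σ)` of inversions of a permutation. -/
def inversions {n : ℕ} (σ : Equiv.Perm (Fin n)) : ℕ :=
  ((Finset.univ : Finset (Fin n × Fin n)).filter (fun p => p.1 < p.2 ∧ σ p.2 < σ p.1)).card

/-- `e(σ) = #{i : σ(i) > i}`. -/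
def exceedances {n : ℕ} (σ : Equiv.Perm (Fin n)) : ℕ :=
  (Finset.univ.filter (fun i : Fin n => i < σ i)).card

/-- The quantum determinant `d_q = ∑_{σ ∈ S_n} (−q)^{−l(σ)} x^1_{σ(1)} x^2_{σ(2)} ⋯ x^n_{σ(n)}`,
computed with the original product of the ambient algebra. -/
def qdet {R : Type u} [CommRing R] {A : Type u} [Ring A] [Algebra R A] {n : ℕ}
    (qq : Rˣ) (x : Fin n → Fin n → A) : A :=
  ∑ σ : Equiv.Perm (Fin n),
    ((((-qq)⁻¹ : Rˣ) : R) ^ inversions σ) •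
      ((List.finRange n).map (fun i => x i (σ i))).prod

/-- The relations of the generators of a quantum exterior algebra. -/
def IsQExterior {R : Type*} [CommRing R] {H : Type*} [Ring H] [Algebra R H] {n : ℕ}
    (p : R) (η : Fin n → H) : Prop :=
  (∀ i, η i * η i = 0) ∧ ∀ i j, i < j → η j * η i = p • (η i * η j)

/-- The coefficient of the sorted monomial in a monomial of a quantum exterior algebra. -/
def extCoeff {R : Type*} [CommRing R] {n : ℕ} (p : R) : List (Fin n) → R
  | [] => 1
  | j :: L => (if j ∈ L then 0 else p ^ (L.toFinset.filter (· < j)).card) * extCoeff p L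

theorem IsQExterior.mul_sort_prod {R : Type*} [CommRing R] {H : Type*} [Ring H] [Algebra R H]
    {n : ℕ} {p : R} {η : Fin n → H} (h : IsQExterior p η) (j : Fin n) (S : Finset (Fin n)) :
    η j * ((S.sort (· ≤ ·)).map η).prod =
      (if j ∈ S then 0 else p ^ (S.filter (· < j)).card) •
        (((insert j S).sort (· ≤ ·)).map η).prod := by
  induction S using Finset.induction_on_min with
  | empty => simp
  | insert m S hm ih =>
    have hmS : m ∉ S := fun h => lt_irrefl _ (hm m h)
    rw [Finset.sort_insert _ (fun b hb => (hm b hb).le) hmS]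
    rcases lt_trichotomy j m with hj | rfl | hj
    · have hjS : j ∉ insert m S := by
        simp only [Finset.mem_insert, not_or]
        exact ⟨hj.ne, fun h => lt_asymm hj (hm j h)⟩
      have hlt : ∀ b ∈ insert m S, j < b := by
        intro b hb
        rcases Finset.mem_insert.1 hb with rfl | hb
        · exact hj
        · exact hj.trans (hm b hb)
      rw [Finset.sort_insert _ (fun b hb => (hlt b hb).le) hjS,
        Finset.sort_insert _ (fun b hb => (hm b hb).le) hmS, if_neg hjS,
        Finset.filter_false_of_mem (fun b hb => (hlt b hb).not_gt)]
      simp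
    · simp [← mul_assoc, h.1]
    · have hins : ∀ b ∈ insert j S, m < b := by
        intro b hb
        rcases Finset.mem_insert.1 hb with rfl | hb
        · exact hj
        · exact hm b hb
      have hmj : m ∉ insert j S := fun h => lt_irrefl _ (hins m h)
      have hmf : m ∉ S.filter (· < j) := fun h => hmS (Finset.mem_filter.1 h).1
      rw [Finset.insert_comm, Finset.sort_insert _ (fun b hb => (hins b hb).le) hmj,
        List.map_cons, List.prod_cons, List.map_cons, List.prod_cons, ← mul_assoc,
        h.2 m j hj, smul_mul_assoc, mul_assoc, ih, Finset.filter_insert, if_pos hj,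
        Finset.card_insert_of_notMem hmf]
      by_cases hjS : j ∈ S
      · simp [hjS]
      · simp [hjS, hj.ne', pow_succ', smul_smul]

theorem IsQExterior.list_prod {R : Type*} [CommRing R] {H : Type*} [Ring H] [Algebra R H]
    {n : ℕ} {p : R} {η : Fin n → H} (h : IsQExterior p η) (L : List (Fin n)) :
    (L.map η).prod = extCoeff p L • ((L.toFinset.sort (· ≤ ·)).map η).prod := by
  induction L with
  | nil => simp [extCoeff]
  | cons j L ih =>
    rw [List.map_cons, List.prod_cons, ih, mul_smul_comm, h.mul_sort_prod, smul_smul,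
      List.toFinset_cons, extCoeff, mul_comm]
    simp

theorem extCoeff_eq_zero {R : Type*} [CommRing R] {n : ℕ} (p : R) {L : List (Fin n)}
    (h : ¬ L.Nodup) : extCoeff p L = 0 := by
  induction L with
  | nil => simp at h
  | cons j L ih =>
    rw [extCoeff]
    by_cases hj : j ∈ L
    · simp [hj]
    · rw [ih (fun hL => h (List.nodup_cons.2 ⟨hj, hL⟩)), mul_zero]

theorem extCoeff_ofFn {R : Type*} [CommRing R] {n : ℕ} (p : R) {m : ℕ} (f : Fin m → Fin n)
    (hf : Function.Injective f) :
    extCoeff p (List.ofFn f) = p ^ ∑ i, ∑ j, if i < j ∧ f j < f i then 1 else 0 := by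
  induction m with
  | zero => simp [extCoeff]
  | succ m ih =>
    have h0 : f 0 ∉ List.ofFn (fun i => f (Fin.succ i)) := by
      rw [List.mem_ofFn]
      rintro ⟨i, hi⟩
      exact Fin.succ_ne_zero i (hf hi)
    have hs : Function.Injective (fun i => f (Fin.succ i)) := hf.comp (Fin.succ_injective m)
    have hc : ((List.ofFn (fun i => f (Fin.succ i))).toFinset.filter (· < f 0)).card =
        ∑ j : Fin m, if f j.succ < f 0 then 1 else 0 := by
      have : (List.ofFn (fun i => f (Fin.succ i))).toFinset.filter (· < f 0) =
          (Finset.univ.filter (fun j : Fin m => f j.succ < f 0)).image (fun i => f (Fin.succ i)) := by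
        ext b
        simp only [Finset.mem_filter, List.mem_toFinset, List.mem_ofFn,
          Finset.mem_image, Finset.mem_univ, true_and]
        constructor
        · rintro ⟨⟨i, rfl⟩, hi⟩
          exact ⟨i, hi, rfl⟩
        · rintro ⟨i, hi, rfl⟩
          exact ⟨⟨i, rfl⟩, hi⟩
      rw [this, Finset.card_image_of_injective _ hs, Finset.card_filter]
    rw [List.ofFn_succ, extCoeff, if_neg h0, ih _ hs, hc, ← pow_add]
    simp only [Fin.sum_univ_succ, false_and, if_false, zero_add, Fin.succ_pos, true_and,
      Fin.not_lt_zero, Fin.succ_lt_succ_iff]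

theorem inversions_eq_sum {n : ℕ} (σ : Equiv.Perm (Fin n)) :
    inversions σ = ∑ i, ∑ j, if i < j ∧ σ j < σ i then 1 else 0 := by
  rw [inversions, Finset.card_filter, Fintype.sum_prod_type]

theorem prod_map_tmul {R : Type*} [CommRing R] {B H : Type*} [Ring B] [Algebra R B] [Ring H]
    [Algebra R H] {ι : Type*} (L : List ι) (f : ι → B) (g : ι → H) :
    (L.map (fun i => f i ⊗ₜ[R] g i)).prod = (L.map f).prod ⊗ₜ[R] (L.map g).prod := by
  induction L with
  | nil => simp [Algebra.TensorProduct.one_def]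
  | cons a L ih => simp [ih]

/-- Substituting generic linear combinations of quantum exterior generators into the top monomial
produces the quantum determinant of the coefficients. -/
theorem IsQExterior.prod_sum_tmul {R : Type u} [CommRing R] {B H : Type u} [Ring B] [Algebra R B]
    [Ring H] [Algebra R H] {n : ℕ} {qq : Rˣ} {η : Fin n → H}
    (h : IsQExterior (((-qq)⁻¹ : Rˣ) : R) η) (z : Fin n → Fin n → B) :
    ((List.finRange n).map (fun i => ∑ k, z i k ⊗ₜ[R] η k)).prod =
      qdet qq z ⊗ₜ[R] ((List.finRange n).map η).prod := by
  have h1 := (MultilinearMap.mkPiAlgebraFin R n (B ⊗[R] H)).map_sum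
    (fun i k => z i k ⊗ₜ[R] η k)
  simp only [MultilinearMap.mkPiAlgebraFin_apply, List.ofFn_eq_map] at h1
  rw [h1, qdet, TensorProduct.sum_tmul]
  symm
  refine Fintype.sum_of_injective (fun σ : Equiv.Perm (Fin n) => (σ : Fin n → Fin n))
    DFunLike.coe_injective _ _ ?_ ?_
  · intro f hf
    have hni : ¬ Function.Injective f := fun hi =>
      hf ⟨Equiv.ofBijective f (Finite.injective_iff_bijective.1 hi), rfl⟩
    have hz : ((List.finRange n).map (fun i => η (f i))).prod = 0 := by
      have := h.list_prod (List.ofFn f)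
      rw [extCoeff_eq_zero _ (fun hh => hni (List.nodup_ofFn.1 hh)), zero_smul,
        List.ofFn_eq_map, List.map_map] at this
      exact this
    rw [prod_map_tmul, hz, TensorProduct.tmul_zero]
  · intro σ
    have hz : ((List.finRange n).map (fun i => η (σ i))).prod =
        ((((-qq)⁻¹ : Rˣ) : R) ^ inversions σ) • ((List.finRange n).map η).prod := by
      have := h.list_prod (List.ofFn σ)
      have hu : (List.ofFn σ).toFinset = Finset.univ := by
        ext b
        simpa [List.mem_ofFn] using σ.surjective b
      rw [extCoeff_ofFn _ _ σ.injective, ← inversions_eq_sum, hu, Fin.sort_univ,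
        List.ofFn_eq_map, List.map_map] at this
      exact this
    rw [prod_map_tmul, hz, TensorProduct.smul_tmul]

theorem coe_neg_inv_unit {R : Type u} [CommRing R] (qq : Rˣ) :
    (((-qq)⁻¹ : Rˣ) : R) = -((qq⁻¹ : Rˣ) : R) := by
  rw [inv_neg, Units.val_neg]

/-- A double sum over a product of quantum exterior generators, reduced to increasing pairs. -/
theorem IsQExterior.sum_mul_sum {R : Type*} [CommRing R] {B H : Type*} [Ring B] [Algebra R B]
    [Ring H] [Algebra R H] {n : ℕ} {p : R} {η : Fin n → H} (h : IsQExterior p η)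
    (a b : Fin n → B) :
    (∑ k, a k ⊗ₜ[R] η k) * (∑ l, b l ⊗ₜ[R] η l) =
      ∑ k, ∑ l, if k < l then (a k * b l + p • (a l * b k)) ⊗ₜ[R] (η k * η l) else 0 := by
  have key : ∀ k l, (a k ⊗ₜ[R] η k) * (b l ⊗ₜ[R] η l) =
      (if k < l then (a k * b l) ⊗ₜ[R] (η k * η l) else 0) +
        (if l < k then (p • (a k * b l)) ⊗ₜ[R] (η l * η k) else 0) := by
    intro k l
    rw [Algebra.TensorProduct.tmul_mul_tmul]
    rcases lt_trichotomy k l with hkl | rfl | hkl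
    · simp [hkl, hkl.not_gt]
    · simp [h.1]
    · simp [hkl, hkl.not_gt, h.2 l k hkl, TensorProduct.smul_tmul]
  simp only [Finset.sum_mul_sum, key, Finset.sum_add_distrib]
  rw [add_comm, Finset.sum_comm, add_comm, ← Finset.sum_add_distrib]
  refine Finset.sum_congr rfl fun k _ => ?_
  rw [← Finset.sum_add_distrib]
  refine Finset.sum_congr rfl fun l _ => ?_
  split_ifs <;> simp [TensorProduct.add_tmul]

/-- The coaction of a quantum matrix preserves the quantum exterior relations. -/
theorem IsQExterior.coaction {R : Type u} [CommRing R] {B H : Type u} [Ring B] [Algebra R B]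
    [Ring H] [Algebra R H] {n : ℕ} {qq : Rˣ} {η : Fin n → H}
    (h : IsQExterior (((-qq)⁻¹ : Rˣ) : R) η) {y : Fin n → Fin n → B} (hy : OqMnRels n qq y) :
    IsQExterior (((-qq)⁻¹ : Rˣ) : R) (fun i => ∑ k, y i k ⊗ₜ[R] η k) := by
  obtain ⟨hrow, -, hcomm, hcross⟩ := hy
  rw [coe_neg_inv_unit] at h ⊢
  refine ⟨fun i => ?_, fun i j hij => ?_⟩
  · rw [h.sum_mul_sum]
    refine Finset.sum_eq_zero fun k _ => Finset.sum_eq_zero fun l _ => ?_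
    split_ifs with hkl
    · rw [hrow i k l hkl, smul_smul, neg_mul, Units.inv_mul]
      simp
    · rfl
  · rw [h.sum_mul_sum, h.sum_mul_sum, Finset.smul_sum]
    refine Finset.sum_congr rfl fun k _ => ?_
    rw [Finset.smul_sum]
    refine Finset.sum_congr rfl fun l _ => ?_
    split_ifs with hkl
    · rw [TensorProduct.smul_tmul']
      congr 1
      have h1 := sub_eq_iff_eq_add.1 (hcross i j k l hij hkl)
      rw [← hcomm i j k l hij hkl, h1]
      have hq := congrArg (· • (y i l * y j k)) (Units.inv_mul qq)
      linear_combination (norm := module) -hq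
    · simp

/-- Left multiplication by the `j`-th generator on the standard model of the quantum exterior
algebra, which has a basis indexed by subsets. -/
def extOp {R : Type u} [CommRing R] (n : ℕ) (p : R) (j : Fin n) :
    Module.End R (Finset (Fin n) →₀ R) :=
  Finsupp.linearCombination R fun S =>
    if j ∈ S then 0 else Finsupp.single (insert j S) (p ^ (S.filter (· < j)).card)

theorem extOp_single {R : Type u} [CommRing R] {n : ℕ} (p : R) (j : Fin n)
    (S : Finset (Fin n)) (c : R) :
    extOp n p j (Finsupp.single S c) =
      if j ∈ S then 0 else Finsupp.single (insert j S) (c * p ^ (S.filter (· < j)).card) := by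
  rw [extOp, Finsupp.linearCombination_single]
  split_ifs <;> simp

theorem isQExterior_extOp {R : Type u} [CommRing R] (n : ℕ) (p : R) :
    IsQExterior p (extOp n p) := by
  refine ⟨fun i => ?_, fun i j hij => ?_⟩
  · refine Finsupp.lhom_ext fun S c => ?_
    rw [Module.End.mul_apply, extOp_single]
    split_ifs <;> simp [extOp_single, -Finsupp.single_mul]
  · refine Finsupp.lhom_ext fun S c => ?_
    rw [Module.End.mul_apply, LinearMap.smul_apply, Module.End.mul_apply, extOp_single,
      extOp_single]
    by_cases hi : i ∈ S
    · by_cases hj : j ∈ S <;> simp [hi, hj, extOp_single, -Finsupp.single_mul]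
    · by_cases hj : j ∈ S
      · simp [hi, hj, extOp_single, -Finsupp.single_mul]
      · have hif : i ∉ S.filter (· < j) := fun h => hi (Finset.mem_filter.1 h).1
        simp only [hi, hj, if_false, extOp_single, Finset.mem_insert, hij.ne, hij.ne', or_self,
          Finset.filter_insert, hij, if_true, hij.not_gt, Finset.card_insert_of_notMem hif,
          Finsupp.smul_single, smul_eq_mul, Finset.insert_comm j i]
        congr 1
        ring

/-- The coefficient of the top monomial in the standard model of the quantum exterior algebra. -/
def topCoeff (R : Type u) [CommRing R] (n : ℕ) :
    Module.End R (Finset (Fin n) →₀ R) →ₗ[R] R :=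
  (Finsupp.lapply Finset.univ).comp (LinearMap.applyₗ (Finsupp.single ∅ 1))

theorem extOp_list_prod {R : Type u} [CommRing R] {n : ℕ} (p : R) (L : List (Fin n)) :
    (L.map (extOp n p)).prod (Finsupp.single ∅ 1) =
      Finsupp.single L.toFinset (extCoeff p L) := by
  induction L with
  | nil => simp [extCoeff]
  | cons j L ih =>
    rw [List.map_cons, List.prod_cons, Module.End.mul_apply, ih, extOp_single, extCoeff]
    by_cases hj : j ∈ L <;> simp [hj, mul_comm]

theorem topCoeff_prod {R : Type u} [CommRing R] (n : ℕ) (p : R) :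
    topCoeff R n ((List.finRange n).map (extOp n p)).prod = 1 := by
  have h1 : extCoeff p (List.finRange n) = 1 := by
    have := extCoeff_ofFn p (id : Fin n → Fin n) Function.injective_id
    rw [List.ofFn_id] at this
    rw [this, Finset.sum_eq_zero, pow_zero]
    intro i _
    refine Finset.sum_eq_zero fun j _ => if_neg fun h => lt_asymm h.1 h.2
  simp only [topCoeff, LinearMap.comp_apply, LinearMap.applyₗ_apply_apply, extOp_list_prod, h1,
    Finsupp.lapply_apply]
  simp

theorem tmul_right_cancel_of_functional {R : Type*} [CommRing R] {M N : Type*} [AddCommGroup M]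
    [Module R M] [AddCommGroup N] [Module R N] (θ : N →ₗ[R] R) {e : N} (he : θ e = 1) {m m' : M}
    (h : m ⊗ₜ[R] e = m' ⊗ₜ[R] e) : m = m' := by
  have := congrArg (TensorProduct.rid R M ∘ TensorProduct.map LinearMap.id θ) h
  simpa [he] using this

theorem qdet_map {R : Type u} [CommRing R] {B C : Type u} [Ring B] [Algebra R B] [Ring C]
    [Algebra R C] {n : ℕ} (qq : Rˣ) (f : B →ₐ[R] C) (y : Fin n → Fin n → B) :
    f (qdet qq y) = qdet qq (fun i j => f (y i j)) := by
  simp [qdet, map_list_prod, List.map_map, Function.comp_def]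

/-- The quantum determinant is grouplike for the matrix comultiplication. -/
theorem qdet_sum_tmul {R : Type u} [CommRing R] {B : Type u} [Ring B] [Algebra R B] {n : ℕ}
    {qq : Rˣ} {y : Fin n → Fin n → B} (hy : OqMnRels n qq y) :
    qdet qq (fun i j => ∑ k, y i k ⊗ₜ[R] y k j) = qdet qq y ⊗ₜ[R] qdet qq y := by
  have hξ := isQExterior_extOp n (((-qq)⁻¹ : Rˣ) : R)
  refine tmul_right_cancel_of_functional (topCoeff R n)
    (e := ((List.finRange n).map (extOp n (((-qq)⁻¹ : Rˣ) : R))).prod)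
    (topCoeff_prod n (((-qq)⁻¹ : Rˣ) : R)) ?_
  apply (Algebra.TensorProduct.assoc R R R B B
    (Module.End R (Finset (Fin n) →₀ R))).injective
  rw [← hξ.prod_sum_tmul, map_list_prod, List.map_map, Algebra.TensorProduct.assoc_tmul,
    ← hξ.prod_sum_tmul, ← (hξ.coaction hy).prod_sum_tmul]
  congr 2
  funext i
  simp only [Function.comp_apply, map_sum, TensorProduct.sum_tmul, TensorProduct.tmul_sum,
    Algebra.TensorProduct.assoc_tmul]
  exact Finset.sum_comm

theorem exists_range_sum_of_mem_closure {X M : Type*} [Nonempty X] [AddCommMonoid M] (g : X → M)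
    {t : M} (ht : t ∈ AddSubmonoid.closure (Set.range g)) :
    ∃ (k : ℕ) (f : ℕ → X), t = ∑ i ∈ Finset.range k, g (f i) := by
  induction ht using AddSubmonoid.closure_induction with
  | mem t h =>
    obtain ⟨a, rfl⟩ := h
    exact ⟨1, fun _ => a, by simp⟩
  | zero => exact ⟨0, fun _ => Classical.arbitrary X, by simp⟩
  | add t t' _ _ h h' =>
    obtain ⟨k, f, rfl⟩ := h
    obtain ⟨k', f', rfl⟩ := h'
    refine ⟨k + k', fun i => if i < k then f i else f' (i - k), ?_⟩
    rw [Finset.sum_range_add]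
    congr 1
    · exact Finset.sum_congr rfl fun i hi => by simp [Finset.mem_range.1 hi]
    · exact Finset.sum_congr rfl fun i _ => by simp

theorem exists_nat_tmul_repr {R : Type*} [CommRing R] {M N : Type*} [AddCommGroup M] [Module R M]
    [AddCommGroup N] [Module R N] (t : M ⊗[R] N) :
    ∃ (s : Finset ℕ) (t1 : ℕ → M) (t2 : ℕ → N), t = ∑ i ∈ s, t1 i ⊗ₜ[R] t2 i := by
  have ht : t ∈ AddSubmonoid.closure (Set.range fun p : M × N => p.1 ⊗ₜ[R] p.2) := by
    induction t with
    | zero => exact zero_mem _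
    | tmul a b => exact AddSubmonoid.subset_closure ⟨(a, b), rfl⟩
    | add a b ha hb => exact add_mem ha hb
  obtain ⟨k, f, h⟩ := exists_range_sum_of_mem_closure _ ht
  exact ⟨_, fun i => (f i).1, fun i => (f i).2, h⟩

theorem exists_nat_tmul_tmul_repr {R : Type*} [CommRing R] {M N P : Type*} [AddCommGroup M]
    [Module R M] [AddCommGroup N] [Module R N] [AddCommGroup P] [Module R P]
    (t : M ⊗[R] (N ⊗[R] P)) :
    ∃ (s : Finset ℕ) (t1 : ℕ → M) (t2 : ℕ → N) (t3 : ℕ → P),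
      t = ∑ i ∈ s, t1 i ⊗ₜ[R] (t2 i ⊗ₜ[R] t3 i) := by
  have ht : t ∈ AddSubmonoid.closure
      (Set.range fun p : M × N × P => p.1 ⊗ₜ[R] (p.2.1 ⊗ₜ[R] p.2.2)) := by
    induction t with
    | zero => exact zero_mem _
    | tmul a b =>
      induction b with
      | zero => simp
      | tmul b c => exact AddSubmonoid.subset_closure ⟨(a, b, c), rfl⟩
      | add b c hb hc =>
        rw [TensorProduct.tmul_add]
        exact add_mem hb hc
    | add a b ha hb => exact add_mem ha hb
  obtain ⟨k, f, h⟩ := exists_range_sum_of_mem_closure _ ht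
  exact ⟨_, fun i => (f i).1, fun i => (f i).2.1, fun i => (f i).2.2, h⟩

section DualQuasitriangular

variable {R : Type u} [CommRing R] {A : Type u} [Ring A] [Bialgebra R A]
  {ρ ρt : A →ₗ[R] A →ₗ[R] R}

theorem IsDQT.mul_left (hρ : IsDQT ρ) (a b c : A) :
    ρ (a * b) c = LinearMap.mul' R R
      (TensorProduct.map (ρ a) (ρ b) (Coalgebra.comul (R := R) c)) := by
  obtain ⟨s, c1, c2, h⟩ := exists_nat_tmul_repr (Coalgebra.comul (R := R) c)
  rw [hρ.1 a b c s c1 c2 h, h]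
  simp

theorem IsDQT.mul_right (hρ : IsDQT ρ) (a b c : A) :
    ρ a (b * c) = LinearMap.mul' R R
      (TensorProduct.map (ρ.flip c) (ρ.flip b) (Coalgebra.comul (R := R) a)) := by
  obtain ⟨s, a1, a2, h⟩ := exists_nat_tmul_repr (Coalgebra.comul (R := R) a)
  rw [hρ.2.1 a b c s a1 a2 h, h]
  simp

/-- Pairing with a grouplike element in the first argument is a character. -/
def IsDQT.leftCharacter (hρ : IsDQT ρ) {g : A} (hg : Coalgebra.comul (R := R) g = g ⊗ₜ[R] g)
    (hε : Coalgebra.counit (R := R) g = 1) : A →ₐ[R] R :=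
  AlgHom.ofLinearMap (ρ g) ((hρ.2.2.1 g).trans hε) fun a b => by
    rw [hρ.mul_right, hg]
    simp [mul_comm]

/-- Pairing with a grouplike element in the second argument is a character. -/
def IsDQT.rightCharacter (hρ : IsDQT ρ) {g : A} (hg : Coalgebra.comul (R := R) g = g ⊗ₜ[R] g)
    (hε : Coalgebra.counit (R := R) g = 1) : A →ₐ[R] R :=
  AlgHom.ofLinearMap (ρ.flip g) ((hρ.2.2.2.1 g).trans hε) fun a b => by
    rw [LinearMap.flip_apply, hρ.mul_left, hg]
    simp

/-- The matrix representation obtained by pairing with a matrix coalgebra on the right. -/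
def IsDQT.leftMatrixRep (hρ : IsDQT ρ) {n : ℕ} (x : Fin n → Fin n → A)
    (hΔ : ∀ i j, Coalgebra.comul (R := R) (x i j) = ∑ k, x i k ⊗ₜ[R] x k j)
    (hε : ∀ i j, Coalgebra.counit (R := R) (x i j) = if i = j then (1 : R) else 0) :
    A →ₐ[R] Matrix (Fin n) (Fin n) R :=
  AlgHom.ofLinearMap
    { toFun := fun a => Matrix.of fun k l => ρ a (x k l)
      map_add' := fun a b => by ext; simp
      map_smul' := fun c a => by ext; simp }
    (by ext k l; simp [hρ.2.2.2.1, hε, Matrix.one_apply])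
    (fun a b => by ext k l; simp [hρ.mul_left, hΔ, Matrix.mul_apply])

/-- The matrix representation obtained by pairing with a matrix coalgebra on the left. -/
def IsDQT.rightMatrixRep (hρ : IsDQT ρ) {n : ℕ} (x : Fin n → Fin n → A)
    (hΔ : ∀ i j, Coalgebra.comul (R := R) (x i j) = ∑ k, x i k ⊗ₜ[R] x k j)
    (hε : ∀ i j, Coalgebra.counit (R := R) (x i j) = if i = j then (1 : R) else 0) :
    A →ₐ[R] Matrix (Fin n) (Fin n) R :=
  AlgHom.ofLinearMap
    { toFun := fun a => Matrix.of fun k l => ρ (x l k) a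
      map_add' := fun a b => by ext; simp
      map_smul' := fun c a => by ext; simp }
    (by ext k l; simp [hρ.2.2.1, hε, Matrix.one_apply, eq_comm])
    (fun a b => by ext k l; simp [hρ.mul_right, hΔ, Matrix.mul_apply, mul_comm])

/-- A bilinear form as an element of the convolution algebra of maps from `A` to the opposite of
the dual algebra of `A`, i.e. of `Hom(A ⊗ A^cop, R)`. -/
def toCopConv (α : A →ₗ[R] A →ₗ[R] R) :
    WithConv (A →ₗ[R] (WithConv (A →ₗ[R] R))ᵐᵒᵖ) :=
  WithConv.toConv (((MulOpposite.opLinearEquiv R).toLinearMap.comp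
    (WithConv.linearEquiv R (A →ₗ[R] R)).symm.toLinearMap).comp α)

theorem toCopConv_injective : Function.Injective (toCopConv (R := R) (A := A)) := by
  intro α β h
  ext a b
  exact congrArg (fun F : WithConv (A →ₗ[R] (WithConv (A →ₗ[R] R))ᵐᵒᵖ) =>
    (F.ofConv a).unop.ofConv b) h

theorem toCopConv_mul_apply (α β : A →ₗ[R] A →ₗ[R] R) {a b : A} {s t : Finset ℕ}
    {a1 a2 b1 b2 : ℕ → A} (ha : Coalgebra.comul (R := R) a = ∑ i ∈ s, a1 i ⊗ₜ[R] a2 i)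
    (hb : Coalgebra.comul (R := R) b = ∑ j ∈ t, b1 j ⊗ₜ[R] b2 j) :
    ((toCopConv α * toCopConv β).ofConv a).unop.ofConv b =
      ∑ i ∈ s, ∑ j ∈ t, α (a1 i) (b2 j) * β (a2 i) (b1 j) := by
  have h1 : (toCopConv α * toCopConv β).ofConv a =
      ∑ i ∈ s, (toCopConv α).ofConv (a1 i) * (toCopConv β).ofConv (a2 i) := by
    rw [LinearMap.convMul_apply, ha]
    simp
  have h2 : ∀ f : (WithConv (A →ₗ[R] R))ᵐᵒᵖ, f.unop.ofConv b = (LinearMap.applyₗ b ∘ₗ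
      (WithConv.linearEquiv R (A →ₗ[R] R)).toLinearMap ∘ₗ
        (MulOpposite.opLinearEquiv R).symm.toLinearMap) f := fun f => rfl
  rw [h1, h2, map_sum]
  refine Finset.sum_congr rfl fun i _ => ?_
  rw [← h2, MulOpposite.unop_mul, LinearMap.convMul_apply, hb]
  simp [toCopConv, mul_comm]

theorem toCopConv_eq_one {F : WithConv (A →ₗ[R] (WithConv (A →ₗ[R] R))ᵐᵒᵖ)}
    (h : ∀ a b, (F.ofConv a).unop.ofConv b =
      Coalgebra.counit (R := R) a * Coalgebra.counit (R := R) b) : F = 1 := by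
  refine WithConv.ext (LinearMap.ext fun a => MulOpposite.unop_injective
    (WithConv.ext (LinearMap.ext fun b => (h a b).trans ?_)))
  simp [LinearMap.convOne_def, Algebra.algebraMap_eq_smul_one]

theorem IsCopConvInv.toCopConv_mul (h : IsCopConvInv ρ ρt) :
    toCopConv ρt * toCopConv ρ = 1 ∧ toCopConv ρ * toCopConv ρt = 1 := by
  constructor
  all_goals
    refine toCopConv_eq_one fun a b => ?_
    obtain ⟨s, a1, a2, ha⟩ := exists_nat_tmul_repr (Coalgebra.comul (R := R) a)
    obtain ⟨t, b1, b2, hb⟩ := exists_nat_tmul_repr (Coalgebra.comul (R := R) b)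
    rw [toCopConv_mul_apply _ _ ha hb]
  · exact (h a b s t a1 a2 b1 b2 ha hb).1
  · exact (h a b s t a1 a2 b1 b2 ha hb).2

theorem IsCopConvInv.unique {ρt' : A →ₗ[R] A →ₗ[R] R} (h : IsCopConvInv ρ ρt)
    (h' : IsCopConvInv ρ ρt') : ρt = ρt' :=
  toCopConv_injective (left_inv_eq_right_inv h.toCopConv_mul.1 h'.toCopConv_mul.2)

section Pullback

variable {A' : Type u} [Ring A'] [Bialgebra R A'] {ρ' ρt' : A' →ₗ[R] A' →ₗ[R] R}
  {f : A →ₐ[R] A'}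

theorem comul_map_eq_sum
    (hfΔ : ∀ a, Coalgebra.comul (R := R) (f a) =
      TensorProduct.map f.toLinearMap f.toLinearMap (Coalgebra.comul (R := R) a))
    {a : A} {s : Finset ℕ} {a1 a2 : ℕ → A}
    (h : Coalgebra.comul (R := R) a = ∑ i ∈ s, a1 i ⊗ₜ[R] a2 i) :
    Coalgebra.comul (R := R) (f a) = ∑ i ∈ s, f (a1 i) ⊗ₜ[R] f (a2 i) := by
  simp [hfΔ, h]

theorem IsDQT.map_eq (hρ : IsDQT ρ) (hρ' : IsDQT ρ') {n : ℕ} {x : Fin n → Fin n → A}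
    (htop : Algebra.adjoin R (Set.range fun p : Fin n × Fin n => x p.1 p.2) = ⊤)
    (hΔ : ∀ i j, Coalgebra.comul (R := R) (x i j) = ∑ k, x i k ⊗ₜ[R] x k j)
    (hε : ∀ i j, Coalgebra.counit (R := R) (x i j) = if i = j then (1 : R) else 0)
    (hfΔ : ∀ a, Coalgebra.comul (R := R) (f a) =
      TensorProduct.map f.toLinearMap f.toLinearMap (Coalgebra.comul (R := R) a))
    (hfε : ∀ a, Coalgebra.counit (R := R) (f a) = Coalgebra.counit (R := R) a)
    (hx : ∀ i j k l, ρ' (f (x i j)) (f (x k l)) = ρ (x i j) (x k l)) (a b : A) :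
    ρ' (f a) (f b) = ρ a b := by
  have h1 : (hρ'.leftMatrixRep (fun i j => f (x i j)) (fun i j => by simp [hfΔ, hΔ])
      (fun i j => by rw [hfε, hε])).comp f = hρ.leftMatrixRep x hΔ hε := by
    refine AlgHom.ext_of_adjoin_eq_top htop ?_
    rintro _ ⟨⟨i, j⟩, rfl⟩
    ext k l
    exact hx i j k l
  have h2 : ∀ a k l, ρ' (f a) (f (x k l)) = ρ a (x k l) := fun a k l =>
    congrFun (congrFun (DFunLike.congr_fun h1 a) k) l
  have hb : b ∈ Algebra.adjoin R (Set.range fun p : Fin n × Fin n => x p.1 p.2) := htop ▸ trivial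
  induction hb using Algebra.adjoin_induction generalizing a with
  | mem b hb =>
    obtain ⟨⟨k, l⟩, rfl⟩ := hb
    exact h2 a k l
  | algebraMap r =>
    rw [Algebra.algebraMap_eq_smul_one, map_smul, map_smul, map_smul, map_one, hρ'.2.2.1,
      hρ.2.2.1, hfε]
  | add b c _ _ hb hc => simp [hb, hc]
  | mul b c _ _ hb hc =>
    obtain ⟨s, a1, a2, h⟩ := exists_nat_tmul_repr (Coalgebra.comul (R := R) a)
    rw [map_mul, hρ.mul_right, hρ'.mul_right, comul_map_eq_sum hfΔ h, h]
    simp [hb, hc]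

theorem IsCopConvInv.map_eq (h : IsCopConvInv ρ ρt) (h' : IsCopConvInv ρ' ρt')
    (hfΔ : ∀ a, Coalgebra.comul (R := R) (f a) =
      TensorProduct.map f.toLinearMap f.toLinearMap (Coalgebra.comul (R := R) a))
    (hfε : ∀ a, Coalgebra.counit (R := R) (f a) = Coalgebra.counit (R := R) a)
    (hf : ∀ a b, ρ' (f a) (f b) = ρ a b) (a b : A) : ρt' (f a) (f b) = ρt a b := by
  have hpull : IsCopConvInv ρ (ρt'.compl₁₂ f.toLinearMap f.toLinearMap) := by
    intro a b s t a1 a2 b1 b2 ha hb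
    have := h' (f a) (f b) s t _ _ _ _ (comul_map_eq_sum hfΔ ha) (comul_map_eq_sum hfΔ hb)
    simpa only [hf, hfε, LinearMap.compl₁₂_apply, AlgHom.toLinearMap_apply] using this
  rw [h.unique hpull]
  rfl

theorem CovChar.map_eq {cmul : A → A → A} {cmul' : A' → A' → A'} (hc : CovChar ρ ρt cmul)
    (hc' : CovChar ρ' ρt' cmul')
    (hfΔ : ∀ a, Coalgebra.comul (R := R) (f a) =
      TensorProduct.map f.toLinearMap f.toLinearMap (Coalgebra.comul (R := R) a))
    (hf : ∀ a b, ρ' (f a) (f b) = ρ a b) (hft : ∀ a b, ρt' (f a) (f b) = ρt a b) (a b : A) :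
    f (cmul a b) = cmul' (f a) (f b) := by
  have hΔ2 : ∀ a, comul2 (R := R) (f a) = TensorProduct.map f.toLinearMap
      (TensorProduct.map f.toLinearMap f.toLinearMap) (comul2 (R := R) a) := by
    intro a
    obtain ⟨s, a1, a2, h⟩ := exists_nat_tmul_repr (Coalgebra.comul (R := R) a)
    simp [comul2, comul_map_eq_sum hfΔ h, h, hfΔ]
  obtain ⟨s, a1, a2, a3, ha⟩ := exists_nat_tmul_tmul_repr (comul2 (R := R) a)
  obtain ⟨t, b1, b2, b3, hb⟩ := exists_nat_tmul_tmul_repr (comul2 (R := R) b)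
  rw [hc a b s t a1 a2 a3 b1 b2 b3 ha hb,
    hc' (f a) (f b) s t (fun i => f (a1 i)) (fun i => f (a2 i)) (fun i => f (a3 i))
      (fun i => f (b1 i)) (fun i => f (b2 i)) (fun i => f (b3 i))
      (by simp [hΔ2, ha]) (by simp [hΔ2, hb])]
  simp [hf, hft]

end Pullback

/-- A grouplike element pairing trivially with everything. -/
structure IsTransparent (ρ : A →ₗ[R] A →ₗ[R] R) (g : A) : Prop where
  comul : Coalgebra.comul (R := R) g = g ⊗ₜ[R] g
  counit : Coalgebra.counit (R := R) g = 1
  left : ∀ a, ρ g a = Coalgebra.counit (R := R) a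
  right : ∀ a, ρ a g = Coalgebra.counit (R := R) a

namespace IsTransparent

variable {g : A}

theorem comul_eq_sum (hg : IsTransparent ρ g) :
    Coalgebra.comul (R := R) g = ∑ _i ∈ {(0 : ℕ)}, g ⊗ₜ[R] g := by
  simp [hg.comul]

theorem comul2_eq_sum (hg : IsTransparent ρ g) :
    comul2 (R := R) g = ∑ _i ∈ {(0 : ℕ)}, g ⊗ₜ[R] (g ⊗ₜ[R] g) := by
  simp [comul2, hg.comul]

theorem sum_counit_smul {a : A} {s : Finset ℕ} {a1 a2 : ℕ → A}
    (h : Coalgebra.comul (R := R) a = ∑ i ∈ s, a1 i ⊗ₜ[R] a2 i) :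
    ∑ i ∈ s, Coalgebra.counit (R := R) (a1 i) • a2 i = a := by
  have := congrArg (TensorProduct.lid R A) (Coalgebra.rTensor_counit_comul (R := R) a)
  simpa [h] using this

theorem sum_counit_smul' {a : A} {s : Finset ℕ} {a1 a2 : ℕ → A}
    (h : Coalgebra.comul (R := R) a = ∑ i ∈ s, a1 i ⊗ₜ[R] a2 i) :
    ∑ i ∈ s, Coalgebra.counit (R := R) (a2 i) • a1 i = a := by
  have := congrArg (TensorProduct.rid R A) (Coalgebra.lTensor_counit_comul (R := R) a)
  simpa [h] using this

theorem commute (hg : IsTransparent ρ g) (hρ : IsDQT ρ) (a : A) : g * a = a * g := by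
  obtain ⟨t, b1, b2, hb⟩ := exists_nat_tmul_repr (Coalgebra.comul (R := R) a)
  have := hρ.2.2.2.2 g a {0} t _ _ b1 b2 hg.comul_eq_sum hb
  simp only [Finset.sum_singleton, hg.left] at this
  calc g * a = ∑ j ∈ t, Coalgebra.counit (R := R) (b1 j) • (g * b2 j) := by
        conv_lhs => rw [← sum_counit_smul hb]
        simp [Finset.mul_sum]
    _ = ∑ j ∈ t, Coalgebra.counit (R := R) (b2 j) • (b1 j * g) := this.symm
    _ = a * g := by
        conv_rhs => rw [← sum_counit_smul' hb]
        simp [Finset.sum_mul]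

theorem inv_left (hg : IsTransparent ρ g) (h : IsCopConvInv ρ ρt) (a : A) :
    ρt g a = Coalgebra.counit (R := R) a := by
  obtain ⟨t, b1, b2, hb⟩ := exists_nat_tmul_repr (Coalgebra.comul (R := R) a)
  have := (h g a {0} t _ _ b1 b2 hg.comul_eq_sum hb).1
  simp only [Finset.sum_singleton, hg.left, hg.counit, one_mul] at this
  rw [← this]
  conv_lhs => rw [← sum_counit_smul hb]
  simp [mul_comm]

theorem inv_right (hg : IsTransparent ρ g) (h : IsCopConvInv ρ ρt) (a : A) :
    ρt a g = Coalgebra.counit (R := R) a := by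
  obtain ⟨t, b1, b2, hb⟩ := exists_nat_tmul_repr (Coalgebra.comul (R := R) a)
  have := (h a g t {0} b1 b2 _ _ hb hg.comul_eq_sum).1
  simp only [Finset.sum_singleton, hg.right, hg.counit, mul_one] at this
  rw [← this]
  conv_lhs => rw [← sum_counit_smul' hb]
  simp [mul_comm]

theorem cmul_left (hg : IsTransparent ρ g) (h : IsCopConvInv ρ ρt) {cmul : A → A → A}
    (hc : CovChar ρ ρt cmul) (a : A) : cmul g a = g * a := by
  obtain ⟨t, b1, b2, b3, hb⟩ := exists_nat_tmul_tmul_repr (comul2 (R := R) a)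
  rw [hc g a {0} t _ _ _ b1 b2 b3 hg.comul2_eq_sum hb]
  have hsum : ∑ j ∈ t, (Coalgebra.counit (R := R) (b1 j) * Coalgebra.counit (R := R) (b2 j)) •
      b3 j = a := by
    have h1 : TensorProduct.lid R A (TensorProduct.map (Coalgebra.counit (R := R))
        ((TensorProduct.lid R A).toLinearMap ∘ₗ
          TensorProduct.map (Coalgebra.counit (R := R)) LinearMap.id)
        (comul2 (R := R) a)) = a := by
      obtain ⟨s, a1, a2, ha⟩ := exists_nat_tmul_repr (Coalgebra.comul (R := R) a)
      have h2 : ∀ b : A, TensorProduct.lid R A (TensorProduct.map (Coalgebra.counit (R := R))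
          LinearMap.id (Coalgebra.comul (R := R) b)) = b := by
        intro b
        have := congrArg (TensorProduct.lid R A) (Coalgebra.rTensor_counit_comul (R := R) b)
        simpa [LinearMap.rTensor] using this
      simp [comul2, ha, h2, sum_counit_smul ha]
    rw [hb] at h1
    simpa [smul_smul, mul_comm] using h1
  simp only [Finset.sum_singleton, hg.left, hg.inv_left h]
  conv_rhs => rw [← hsum]
  simp [Finset.mul_sum]

theorem cmul_right (hg : IsTransparent ρ g) (h : IsCopConvInv ρ ρt) {cmul : A → A → A}
    (hc : CovChar ρ ρt cmul) (a : A) : cmul a g = a * g := by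
  obtain ⟨t, b1, b2, b3, hb⟩ := exists_nat_tmul_tmul_repr (comul2 (R := R) a)
  rw [hc a g t {0} b1 b2 b3 _ _ _ hb hg.comul2_eq_sum]
  have hsum : ∑ j ∈ t, (Coalgebra.counit (R := R) (b3 j) * Coalgebra.counit (R := R) (b1 j)) •
      b2 j = a := by
    have h1 : TensorProduct.lid R A (TensorProduct.map (Coalgebra.counit (R := R))
        ((TensorProduct.rid R A).toLinearMap ∘ₗ
          TensorProduct.map LinearMap.id (Coalgebra.counit (R := R)))
        (comul2 (R := R) a)) = a := by
      obtain ⟨s, a1, a2, ha⟩ := exists_nat_tmul_repr (Coalgebra.comul (R := R) a)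
      have h2 : ∀ b : A, TensorProduct.rid R A (TensorProduct.map LinearMap.id
          (Coalgebra.counit (R := R)) (Coalgebra.comul (R := R) b)) = b := by
        intro b
        have := congrArg (TensorProduct.rid R A) (Coalgebra.lTensor_counit_comul (R := R) b)
        simpa [LinearMap.lTensor] using this
      simp [comul2, ha, h2, sum_counit_smul ha]
    rw [hb] at h1
    simpa [smul_smul, mul_comm] using h1
  simp only [Finset.sum_singleton, hg.right, hg.inv_right h]
  conv_rhs => rw [← hsum]
  simp [Finset.sum_mul]

end IsTransparent

end DualQuasitriangular

theorem OqMnRels.map {R : Type u} [CommRing R] {B C : Type u} [Ring B] [Algebra R B] [Ring C]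
    [Algebra R C] {n : ℕ} {qq : Rˣ} {y : Fin n → Fin n → B} (hy : OqMnRels n qq y)
    (f : B →ₐ[R] C) : OqMnRels n qq (fun i j => f (y i j)) := by
  obtain ⟨h1, h2, h3, h4⟩ := hy
  refine ⟨fun i j k h => ?_, fun i j k h => ?_, fun i j k l h h' => ?_, fun i j k l h h' => ?_⟩
  · rw [← map_mul, h1 i j k h, map_smul, map_mul]
  · rw [← map_mul, h2 i j k h, map_smul, map_mul]
  · rw [← map_mul, h3 i j k l h h', map_mul]
  · rw [← map_mul, ← map_mul, ← map_sub, h4 i j k l h h', map_smul, map_mul]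

theorem OqMnRels.of_injective {R : Type u} [CommRing R] {B C : Type u} [Ring B] [Algebra R B]
    [Ring C] [Algebra R C] {n : ℕ} {qq : Rˣ} {y : Fin n → Fin n → B} {f : B →ₐ[R] C}
    (hf : Function.Injective f) (hy : OqMnRels n qq (fun i j => f (y i j))) :
    OqMnRels n qq y := by
  obtain ⟨h1, h2, h3, h4⟩ := hy
  refine ⟨fun i j k h => hf ?_, fun i j k h => hf ?_, fun i j k l h h' => hf ?_,
    fun i j k l h h' => hf ?_⟩
  · simpa using h1 i j k h
  · simpa using h2 i j k h
  · simpa using h3 i j k l h h'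
  · simpa using h4 i j k l h h'

/-- A subalgebra receiving a retraction of a rigid algebra is everything. -/
theorem Subalgebra.eq_top_of_retraction {R : Type*} [CommRing R] {A : Type*} [Ring A] [Algebra R A]
    (S : Subalgebra R A) (f : A →ₐ[R] S) (h : S.val.comp f = AlgHom.id R A) : S = ⊤ := by
  refine eq_top_iff.2 fun a _ => ?_
  have := DFunLike.congr_fun h a
  rw [AlgHom.id_apply] at this
  rw [← this]
  exact (f a).2

theorem Equiv.Perm.eq_one_of_forall_le {n : ℕ} {σ : Equiv.Perm (Fin n)} (h : ∀ i, i ≤ σ i) :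
    σ = 1 := by
  have hsum : ∑ i : Fin n, (i : ℕ) = ∑ i, (σ i : ℕ) := (Equiv.sum_comp σ fun i => (i : ℕ)).symm
  have := (Finset.sum_eq_sum_iff_of_le fun i _ => Fin.le_def.1 (h i)).1 hsum
  ext i
  exact (this i (Finset.mem_univ i)).symm

theorem qdet_eq_diag_prod {R : Type u} [CommRing R] {B : Type u} [Ring B] [Algebra R B] {n : ℕ}
    (qq : Rˣ) {y : Fin n → Fin n → B}
    (h : ∀ σ : Equiv.Perm (Fin n), σ ≠ 1 → ∃ i, y i (σ i) = 0) :
    qdet qq y = ((List.finRange n).map (fun i => y i i)).prod := by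
  rw [qdet, Finset.sum_eq_single 1]
  · have : inversions (1 : Equiv.Perm (Fin n)) = 0 := by
      rw [inversions, Finset.card_eq_zero, Finset.filter_eq_empty_iff]
      exact fun p _ hp => lt_asymm hp.1 hp.2
    simp [this]
  · intro σ _ hσ
    obtain ⟨i, hi⟩ := h σ hσ
    rw [List.prod_eq_zero, smul_zero]
    exact List.mem_map.2 ⟨i, List.mem_finRange i, hi⟩
  · simp

theorem qdet_of_upper {R : Type u} [CommRing R] {B : Type u} [Ring B] [Algebra R B] {n : ℕ}
    (qq : Rˣ) {y : Fin n → Fin n → B} (h : ∀ i j, j < i → y i j = 0) :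
    qdet qq y = ((List.finRange n).map (fun i => y i i)).prod := by
  refine qdet_eq_diag_prod qq fun σ hσ => ?_
  by_contra! hne
  exact hσ (Equiv.Perm.eq_one_of_forall_le fun i => not_lt.1 fun hi => hne i (h _ _ hi))

theorem qdet_of_lower {R : Type u} [CommRing R] {B : Type u} [Ring B] [Algebra R B] {n : ℕ}
    (qq : Rˣ) {y : Fin n → Fin n → B} (h : ∀ i j, i < j → y i j = 0) :
    qdet qq y = ((List.finRange n).map (fun i => y i i)).prod := by
  refine qdet_eq_diag_prod qq fun σ hσ => ?_
  by_contra! hne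
  have h1 : σ⁻¹ = 1 := Equiv.Perm.eq_one_of_forall_le fun i => not_lt.1 fun hi =>
    hne (σ⁻¹ i) (h _ _ (by simpa using hi))
  exact hσ (inv_eq_one.1 h1)

theorem prod_diagonal_eq_one {R : Type u} [CommRing R] (n : ℕ) (qr : Rˣ) :
    ((List.finRange n).map (fun i => Matrix.diagonal fun k : Fin n =>
      ((qr⁻¹ : Rˣ) : R) * if i = k then ((qr ^ n : Rˣ) : R) else 1)).prod = 1 := by
  have h := map_list_prod (Matrix.diagonalRingHom (Fin n) R)
    ((List.finRange n).map (fun i => fun k : Fin n =>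
      ((qr⁻¹ : Rˣ) : R) * if i = k then ((qr ^ n : Rˣ) : R) else 1))
  rw [List.map_map, ← Fin.prod_univ_def] at h
  refine Eq.trans (by rfl) (h.symm.trans ?_)
  rw [← map_one (Matrix.diagonalRingHom (Fin n) R)]
  congr 1
  funext k
  rw [Finset.prod_apply, Finset.prod_mul_distrib, Finset.prod_ite_eq' Finset.univ k]
  simp [← mul_pow]

/-- The quantum determinant pairs trivially with `O_q(M_n)`; the normalization by `q^{-1/n}` is
what makes this work. -/
theorem qdet_isTransparent {R : Type u} [CommRing R] {n : ℕ} {qr : Rˣ} {A : Type u} [Ring A]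
    [Bialgebra R A] {x : Fin n → Fin n → A} (hx : OqMnRels n (qr ^ n) x)
    (htop : Algebra.adjoin R (Set.range fun p : Fin n × Fin n => x p.1 p.2) = ⊤)
    (hΔ : ∀ i j, Coalgebra.comul (R := R) (x i j) = ∑ k, x i k ⊗ₜ[R] x k j)
    (hε : ∀ i j, Coalgebra.counit (R := R) (x i j) = if i = j then (1 : R) else 0)
    {ρ : A →ₗ[R] A →ₗ[R] R} (hρ : IsDQT ρ)
    (hρx : ∀ i j k l, ρ (x i j) (x k l) = RmatVal n qr i j k l) :
    IsTransparent ρ (qdet (qr ^ n) x) := by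
  have hcomul : Coalgebra.comul (R := R) (qdet (qr ^ n) x) =
      qdet (qr ^ n) x ⊗ₜ[R] qdet (qr ^ n) x := by
    rw [← qdet_sum_tmul hx, ← Bialgebra.comulAlgHom_apply, qdet_map]
    simp only [Bialgebra.comulAlgHom_apply, hΔ]
  have hcounit : Coalgebra.counit (R := R) (qdet (qr ^ n) x) = 1 := by
    rw [← Bialgebra.counitAlgHom_apply, qdet_map, qdet_of_upper]
    · simp [hε]
    · intro i j hij
      simp [hε, hij.ne']
  have hleft : hρ.leftMatrixRep x hΔ hε (qdet (qr ^ n) x) = 1 := by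
    have hval : ∀ i j, hρ.leftMatrixRep x hΔ hε (x i j) =
        Matrix.of fun k l => RmatVal n qr i j k l := by
      intro i j
      ext k l
      exact hρx i j k l
    rw [qdet_map, qdet_of_upper]
    · rw [← prod_diagonal_eq_one n qr]
      congr 2
      funext i
      rw [hval]
      ext k l
      simp only [Matrix.of_apply, RmatVal, Matrix.diagonal_apply]
      by_cases hkl : k = l
      · subst hkl
        by_cases h : i = k
        · subst h
          simp
        · simp [h]
      · by_cases h : i = l
        · subst h
          simp [hkl]
        · simp [hkl, h]
    · intro i j hij
      rw [hval]
      ext k l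
      simp only [Matrix.of_apply, RmatVal, Matrix.zero_apply]
      by_cases h : i = l
      · subst h
        simp [hij.ne', hij.not_gt]
      · simp [hij.ne', h]
  have hright : hρ.rightMatrixRep x hΔ hε (qdet (qr ^ n) x) = 1 := by
    have hval : ∀ i j, hρ.rightMatrixRep x hΔ hε (x i j) =
        Matrix.of fun k l => RmatVal n qr l k i j := by
      intro i j
      ext k l
      exact hρx l k i j
    rw [qdet_map, qdet_of_lower]
    · rw [← prod_diagonal_eq_one n qr]
      congr 2
      funext i
      rw [hval]
      ext k l
      simp only [Matrix.of_apply, RmatVal, Matrix.diagonal_apply]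
      by_cases hkl : k = l
      · subst hkl
        by_cases h : i = k
        · subst h
          simp
        · simp [h, Ne.symm h]
      · by_cases h : i = k
        · subst h
          simp [hkl, Ne.symm hkl]
        · simp [hkl, Ne.symm hkl, h, Ne.symm h]
    · intro i j hij
      rw [hval]
      ext k l
      simp only [Matrix.of_apply, RmatVal, Matrix.zero_apply]
      by_cases h : i = k
      · subst h
        simp [hij.ne, hij.not_gt]
      · simp [hij.ne, h]
  refine ⟨hcomul, hcounit, fun a => ?_, fun a => ?_⟩
  · have : hρ.leftCharacter hcomul hcounit = Bialgebra.counitAlgHom R A := by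
      refine AlgHom.ext_of_adjoin_eq_top htop ?_
      rintro _ ⟨⟨k, l⟩, rfl⟩
      refine (congrFun (congrFun hleft k) l).trans ?_
      simp [hε, Matrix.one_apply]
    exact DFunLike.congr_fun this a
  · have : hρ.rightCharacter hcomul hcounit = Bialgebra.counitAlgHom R A := by
      refine AlgHom.ext_of_adjoin_eq_top htop ?_
      rintro _ ⟨⟨k, l⟩, rfl⟩
      refine (congrFun (congrFun hright l) k).trans ?_
      simp [hε, Matrix.one_apply, eq_comm]
    exact DFunLike.congr_fun this a

/-- The fractions `ι a * t ^ k` form a subalgebra when `t` is a central inverse of `ι d`. -/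
def fractionSubalgebra {R : Type*} [CommRing R] {A Q : Type*} [Ring A] [Algebra R A] [Ring Q]
    [Algebra R Q] (ι : A →ₐ[R] Q) (d : A) (t : Q) (hc : ∀ a, Commute (ι a) t)
    (hd : ι d * t = 1) : Subalgebra R Q where
  carrier := {z | ∃ a k, z = ι a * t ^ k}
  mul_mem' := by
    rintro _ _ ⟨a, k, rfl⟩ ⟨b, l, rfl⟩
    refine ⟨a * b, k + l, ?_⟩
    rw [map_mul, pow_add, mul_assoc, ← mul_assoc (t ^ k), ← ((hc b).pow_right k).eq]
    simp only [mul_assoc]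
  add_mem' := by
    rintro _ _ ⟨a, k, rfl⟩ ⟨b, l, rfl⟩
    have hp : ∀ m, ι d ^ m * t ^ m = 1 := fun m => by rw [← (hc d).mul_pow, hd, one_pow]
    refine ⟨a * d ^ l + b * d ^ k, k + l, ?_⟩
    rw [map_add, add_mul, map_mul, map_mul, map_pow, map_pow]
    congr 1
    · rw [add_comm, pow_add, mul_assoc, ← mul_assoc (ι d ^ l), hp, one_mul]
    · rw [pow_add, mul_assoc, ← mul_assoc (ι d ^ k), hp, one_mul]
  algebraMap_mem' r := ⟨algebraMap R A r, 0, by simp⟩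

theorem exists_central_localization {R : Type u} [CommRing R] {A : Type u} [Ring A] [Algebra R A]
    {d : A} (hd : ∀ a, d * a = a * d) :
    ∃ (L : Type u) (_ : Ring L) (_ : Algebra R L) (num : A →ₐ[R] L) (t : L),
      (∀ a, t * num a = num a * t) ∧ t * num d = 1 ∧ num d * t = 1 ∧
        ∀ a, num a = 0 → ∃ k : ℕ, d ^ k * a = 0 := by
  have hS : ∀ (s : Submonoid.powers d) (a : A), (s : A) * a = a * s := by
    rintro ⟨_, k, rfl⟩ a
    exact (Commute.pow_left (hd a) k).eq
  let _ : OreLocalization.OreSet (Submonoid.powers d) :=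
    { ore_right_cancel := fun a b s h => ⟨s, by rw [hS, hS, h]⟩
      oreNum := fun a _ => a
      oreDenom := fun _ s => s
      ore_eq := fun a s => hS s a }
  let num : A →ₐ[R] OreLocalization (Submonoid.powers d) A :=
    { (OreLocalization.numeratorRingHom :
        A →+* OreLocalization (Submonoid.powers d) A) with
      commutes' := fun r => rfl }
  obtain ⟨u, hu⟩ : IsUnit (num d) :=
    OreLocalization.numerator_isUnit (⟨d, Submonoid.mem_powers d⟩ : Submonoid.powers d)
  refine ⟨OreLocalization (Submonoid.powers d) A, inferInstance, inferInstance, num,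
    ((u⁻¹ : (OreLocalization (Submonoid.powers d) A)ˣ) :
      OreLocalization (Submonoid.powers d) A), fun a => ?_, ?_, ?_, fun a ha => ?_⟩
  · have : Commute (u : OreLocalization (Submonoid.powers d) A) (num a) := by
      rw [hu, Commute, SemiconjBy, ← map_mul, ← map_mul, hd]
    exact this.units_inv_left.eq
  · rw [← hu, Units.inv_mul]
  · rw [← hu, Units.mul_inv]
  · rw [← map_zero num] at ha
    obtain ⟨s, v, h1, h2⟩ := OreLocalization.oreDiv_eq_iff.1 ha
    obtain ⟨k, hk⟩ : ∃ k : ℕ, d ^ k = (s : A) := s.2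
    refine ⟨k, ?_⟩
    have h3 : (s : A) = v := by simpa using h2
    have h4 : v * a = 0 := by simpa using h1.symm
    rw [hk, h3, h4]

section Universal

variable {R : Type u} [CommRing R] {n : ℕ} {qr : Rˣ}

theorem adjoin_eq_top_of_universal {A : Type u} [Ring A] [Algebra R A] {x : Fin n → Fin n → A}
    (hx : OqMnRels n (qr ^ n) x)
    (hxuniv : ∀ (B : Type u) [Ring B] [Algebra R B] (y : Fin n → Fin n → B),
      OqMnRels n (qr ^ n) y → ∃! f : A →ₐ[R] B, ∀ i j, f (x i j) = y i j) :
    Algebra.adjoin R (Set.range fun p : Fin n × Fin n => x p.1 p.2) = ⊤ := by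
  set S := Algebra.adjoin R (Set.range fun p : Fin n × Fin n => x p.1 p.2)
  obtain ⟨f, hf, -⟩ := hxuniv S (fun i j => ⟨x i j, Algebra.subset_adjoin ⟨(i, j), rfl⟩⟩)
    (OqMnRels.of_injective (f := S.val) Subtype.val_injective hx)
  exact S.eq_top_of_retraction f <| (hxuniv A x hx).unique
    (fun i j => by rw [AlgHom.comp_apply, hf]; rfl) (fun i j => rfl)

/-- An algebra map matching the generating matrices is a morphism of bialgebras. -/
theorem comul_counit_map_of_generators {A A' : Type u} [Ring A] [Bialgebra R A] [Ring A']
    [Bialgebra R A'] {x : Fin n → Fin n → A} {x' : Fin n → Fin n → A'}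
    (htop : Algebra.adjoin R (Set.range fun p : Fin n × Fin n => x p.1 p.2) = ⊤)
    (hΔ : ∀ i j, Coalgebra.comul (R := R) (x i j) = ∑ k, x i k ⊗ₜ[R] x k j)
    (hε : ∀ i j, Coalgebra.counit (R := R) (x i j) = if i = j then (1 : R) else 0)
    (hΔ' : ∀ i j, Coalgebra.comul (R := R) (x' i j) = ∑ k, x' i k ⊗ₜ[R] x' k j)
    (hε' : ∀ i j, Coalgebra.counit (R := R) (x' i j) = if i = j then (1 : R) else 0)
    {f : A →ₐ[R] A'} (hf : ∀ i j, f (x i j) = x' i j) :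
    (∀ a, Coalgebra.comul (R := R) (f a) =
      TensorProduct.map f.toLinearMap f.toLinearMap (Coalgebra.comul (R := R) a)) ∧
    ∀ a, Coalgebra.counit (R := R) (f a) = Coalgebra.counit (R := R) a := by
  have h1 : (Bialgebra.comulAlgHom R A').comp f =
      (Algebra.TensorProduct.map f f).comp (Bialgebra.comulAlgHom R A) := by
    refine AlgHom.ext_of_adjoin_eq_top htop ?_
    rintro _ ⟨⟨i, j⟩, rfl⟩
    simp [hf, hΔ, hΔ']
  have h2 : (Bialgebra.counitAlgHom R A').comp f = Bialgebra.counitAlgHom R A := by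
    refine AlgHom.ext_of_adjoin_eq_top htop ?_
    rintro _ ⟨⟨i, j⟩, rfl⟩
    simp [hf, hε, hε']
  exact ⟨fun a => DFunLike.congr_fun h1 a, fun a => DFunLike.congr_fun h2 a⟩

/-- A morphism of bialgebras matching the dual quasitriangular structures on generators induces
a morphism between the covariantized algebras. -/
theorem exists_covariantized_algHom {A A' : Type u} [Ring A] [Bialgebra R A] [Ring A']
    [Bialgebra R A'] {x : Fin n → Fin n → A} {x' : Fin n → Fin n → A'}
    (htop : Algebra.adjoin R (Set.range fun p : Fin n × Fin n => x p.1 p.2) = ⊤)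
    (hΔ : ∀ i j, Coalgebra.comul (R := R) (x i j) = ∑ k, x i k ⊗ₜ[R] x k j)
    (hε : ∀ i j, Coalgebra.counit (R := R) (x i j) = if i = j then (1 : R) else 0)
    (hΔ' : ∀ i j, Coalgebra.comul (R := R) (x' i j) = ∑ k, x' i k ⊗ₜ[R] x' k j)
    (hε' : ∀ i j, Coalgebra.counit (R := R) (x' i j) = if i = j then (1 : R) else 0)
    {ρ ρt : A →ₗ[R] A →ₗ[R] R} {ρ' ρt' : A' →ₗ[R] A' →ₗ[R] R} (hρ : IsDQT ρ) (hρ' : IsDQT ρ')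
    (hρx : ∀ i j k l, ρ (x i j) (x k l) = RmatVal n qr i j k l)
    (hρx' : ∀ i j k l, ρ' (x' i j) (x' k l) = RmatVal n qr i j k l)
    (hρt : IsCopConvInv ρ ρt) (hρt' : IsCopConvInv ρ' ρt')
    {cmul : A → A → A} {cmul' : A' → A' → A'} (hcmul : CovChar ρ ρt cmul)
    (hcmul' : CovChar ρ' ρt' cmul')
    {B B' : Type u} [Ring B] [Algebra R B] [Ring B'] [Algebra R B']
    (φ : B ≃ₗ[R] A) (hφ1 : φ 1 = 1) (hφm : ∀ a b : B, φ (a * b) = cmul (φ a) (φ b))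
    (ψ : B' ≃ₗ[R] A') (hψ1 : ψ 1 = 1) (hψm : ∀ a b : B', ψ (a * b) = cmul' (ψ a) (ψ b))
    {f : A →ₐ[R] A'} (hf : ∀ i j, f (x i j) = x' i j) :
    ∃ F : B →ₐ[R] B', ∀ b, ψ (F b) = f (φ b) := by
  obtain ⟨hfΔ, hfε⟩ := comul_counit_map_of_generators htop hΔ hε hΔ' hε' hf
  have hfρ := hρ.map_eq hρ' htop hΔ hε hfΔ hfε (fun i j k l => by simp only [hf, hρx, hρx'])
  have hfc := hcmul.map_eq hcmul' hfΔ hfρ (hρt.map_eq hρt' hfΔ hfε hfρ)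
  refine ⟨AlgHom.ofLinearMap (ψ.symm.toLinearMap ∘ₗ f.toLinearMap ∘ₗ φ.toLinearMap) ?_ ?_, ?_⟩
  · refine ψ.injective ?_
    simp [hφ1, hψ1]
  · intro a b
    refine ψ.injective ?_
    simp [hφm, hψm, hfc]
  · intro b
    simp

/-- The kernel of `O_q(M_n) → O_q(SL_n)` is generated by `d_q - 1`, and the map is onto. -/
theorem specialLinear_map_surjective_and_ker {A As : Type u} [Ring A] [Algebra R A] [Ring As]
    [Algebra R As] {x : Fin n → Fin n → A} {xs : Fin n → Fin n → As}
    (hx : OqMnRels n (qr ^ n) x)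
    (htop : Algebra.adjoin R (Set.range fun p : Fin n × Fin n => x p.1 p.2) = ⊤)
    (hcomm : ∀ a, qdet (qr ^ n) x * a = a * qdet (qr ^ n) x)
    (hxs : OqMnRels n (qr ^ n) xs ∧ qdet (qr ^ n) xs = 1)
    (hxsuniv : ∀ (B : Type u) [Ring B] [Algebra R B] (y : Fin n → Fin n → B),
      OqMnRels n (qr ^ n) y ∧ qdet (qr ^ n) y = 1 →
        ∃! f : As →ₐ[R] B, ∀ i j, f (xs i j) = y i j)
    {π : A →ₐ[R] As} (hπ : ∀ i j, π (x i j) = xs i j) :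
    Function.Surjective π ∧ ∀ a, π a = 0 → ∃ c, c * (qdet (qr ^ n) x - 1) = a := by
  constructor
  · rw [← AlgHom.range_eq_top]
    have hinj : Function.Injective π.range.val := Subtype.val_injective
    obtain ⟨f, hf, -⟩ := hxsuniv π.range (fun i j => ⟨xs i j, x i j, hπ i j⟩)
      ⟨OqMnRels.of_injective hinj hxs.1, hinj (by rw [qdet_map, map_one]; exact hxs.2)⟩
    exact π.range.eq_top_of_retraction f <| (hxsuniv As xs hxs).unique
      (fun i j => by rw [AlgHom.comp_apply, hf]; rfl) (fun i j => rfl)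
  · intro a ha
    set d := qdet (qr ^ n) x with hd
    have : (Ideal.span {d - 1}).IsTwoSided := ⟨fun {a} b h => by
      obtain ⟨c, rfl⟩ := Ideal.mem_span_singleton'.1 h
      refine Ideal.mem_span_singleton'.2 ⟨c * b, ?_⟩
      rw [mul_assoc, mul_assoc, mul_sub, sub_mul, hcomm, mul_one, one_mul]⟩
    have hd1 : Ideal.Quotient.mkₐ R (Ideal.span {d - 1}) d = 1 := by
      rw [← map_one (Ideal.Quotient.mkₐ R (Ideal.span {d - 1}))]
      exact Ideal.Quotient.eq.2 (Ideal.mem_span_singleton_self _)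
    obtain ⟨f, hf, -⟩ := hxsuniv (A ⧸ Ideal.span {d - 1})
      (fun i j => Ideal.Quotient.mkₐ R _ (x i j)) ⟨hx.map _, by rw [← qdet_map, ← hd, hd1]⟩
    have hcomp : f.comp π = Ideal.Quotient.mkₐ R (Ideal.span {d - 1}) := by
      refine AlgHom.ext_of_adjoin_eq_top htop ?_
      rintro _ ⟨⟨i, j⟩, rfl⟩
      simp [hπ, hf]
    have ha' : Ideal.Quotient.mkₐ R (Ideal.span {d - 1}) a = 0 := by
      rw [← hcomp, AlgHom.comp_apply, ha, map_zero]
    exact Ideal.mem_span_singleton'.1 (Ideal.Quotient.eq_zero_iff_mem.1 ha')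

/-- Elements of `O_q(GL_n)` are fractions with denominators powers of `d_q`, and the kernel of
`O_q(M_n) → O_q(GL_n)` is the `d_q`-power torsion. -/
theorem generalLinear_map_fraction_and_ker {A AGL : Type u} [Ring A] [Algebra R A] [Ring AGL]
    [Algebra R AGL] {x : Fin n → Fin n → A} {xg : Fin n → Fin n → AGL} {tg : AGL}
    (hx : OqMnRels n (qr ^ n) x)
    (htop : Algebra.adjoin R (Set.range fun p : Fin n × Fin n => x p.1 p.2) = ⊤)
    (hcomm : ∀ a, qdet (qr ^ n) x * a = a * qdet (qr ^ n) x)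
    (hxg : OqMnRels n (qr ^ n) xg ∧ (∀ i j, tg * xg i j = xg i j * tg) ∧
      tg * qdet (qr ^ n) xg = 1 ∧ qdet (qr ^ n) xg * tg = 1)
    (hxguniv : ∀ (B : Type u) [Ring B] [Algebra R B]
        (y : Fin n → Fin n → B) (ty : B),
      (OqMnRels n (qr ^ n) y ∧ (∀ i j, ty * y i j = y i j * ty) ∧
        ty * qdet (qr ^ n) y = 1 ∧ qdet (qr ^ n) y * ty = 1) →
        ∃! f : AGL →ₐ[R] B, (∀ i j, f (xg i j) = y i j) ∧ f tg = ty)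
    {g : A →ₐ[R] AGL} (hg : ∀ i j, g (x i j) = xg i j) :
    (∀ z, ∃ a k, z = g a * tg ^ k) ∧
      ∀ a, g a = 0 → ∃ k : ℕ, qdet (qr ^ n) x ^ k * a = 0 := by
  have hgd : g (qdet (qr ^ n) x) = qdet (qr ^ n) xg := by
    rw [qdet_map]
    simp only [hg]
  constructor
  · have hc : ∀ a, Commute (g a) tg := by
      intro a
      have ha : a ∈ Algebra.adjoin R (Set.range fun p : Fin n × Fin n => x p.1 p.2) :=
        htop ▸ trivial
      induction ha using Algebra.adjoin_induction with
      | mem a ha =>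
        obtain ⟨⟨i, j⟩, rfl⟩ := ha
        rw [hg]
        exact (hxg.2.1 i j).symm
      | algebraMap r =>
        rw [AlgHom.commutes]
        exact Algebra.commutes r tg
      | add a b _ _ ha hb =>
        rw [map_add]
        exact ha.add_left hb
      | mul a b _ _ ha hb =>
        rw [map_mul]
        exact ha.mul_left hb
    set S := fractionSubalgebra g (qdet (qr ^ n) x) tg hc (by rw [hgd, hxg.2.2.2]) with hS
    have hinj : Function.Injective S.val := Subtype.val_injective
    let y : Fin n → Fin n → S := fun i j => ⟨xg i j, x i j, 0, by simp [hg]⟩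
    let t : S := ⟨tg, 1, 1, by simp⟩
    have hy : S.val (qdet (qr ^ n) y) = qdet (qr ^ n) xg := qdet_map _ _ _
    obtain ⟨f, ⟨hf, hft⟩, -⟩ := hxguniv S y t
      ⟨OqMnRels.of_injective hinj hxg.1, fun i j => hinj (hxg.2.1 i j),
        hinj (by rw [map_mul, hy, map_one]; exact hxg.2.2.1),
        hinj (by rw [map_mul, hy, map_one]; exact hxg.2.2.2)⟩
    have htopS : S = ⊤ := S.eq_top_of_retraction f <| (hxguniv AGL xg tg hxg).unique
      ⟨fun i j => by rw [AlgHom.comp_apply, hf]; rfl, by rw [AlgHom.comp_apply, hft]; rfl⟩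
      ⟨fun i j => rfl, rfl⟩
    intro z
    have hz : z ∈ S := htopS ▸ trivial
    exact hz
  · intro a ha
    obtain ⟨L, _, _, num, t, ht, htd, hdt, hker⟩ := exists_central_localization (R := R) hcomm
    obtain ⟨f, ⟨hf, -⟩, -⟩ := hxguniv L (fun i j => num (x i j)) t
      ⟨hx.map num, fun i j => ht _, by rw [← qdet_map, htd], by rw [← qdet_map, hdt]⟩
    have hcomp : f.comp g = num := by
      refine AlgHom.ext_of_adjoin_eq_top htop ?_
      rintro _ ⟨⟨i, j⟩, rfl⟩
      simp [hg, hf]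
    exact hker a (by rw [← hcomp, AlgHom.comp_apply, ha, map_zero])

end Universal

/-- An inverse of a transparent element is transparent once it is grouplike. -/
theorem IsTransparent.of_mul_eq_one {R : Type u} [CommRing R] {A : Type u} [Ring A]
    [Bialgebra R A] {ρ : A →ₗ[R] A →ₗ[R] R} (hρ : IsDQT ρ) {g t : A}
    (hleft : ∀ a, ρ g a = Coalgebra.counit (R := R) a)
    (hright : ∀ a, ρ a g = Coalgebra.counit (R := R) a)
    (htg : t * g = 1) (hΔ : Coalgebra.comul (R := R) t = t ⊗ₜ[R] t)
    (hε : Coalgebra.counit (R := R) t = 1) : IsTransparent ρ t := by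
  refine ⟨hΔ, hε, fun a => ?_, fun a => ?_⟩
  · obtain ⟨s, a1, a2, h⟩ := exists_nat_tmul_repr (Coalgebra.comul (R := R) a)
    have := hρ.1 t g a s a1 a2 h
    rw [htg, hρ.2.2.2.1] at this
    rw [this]
    conv_lhs => rw [← IsTransparent.sum_counit_smul' h]
    simp [hleft, mul_comm]
  · obtain ⟨s, a1, a2, h⟩ := exists_nat_tmul_repr (Coalgebra.comul (R := R) a)
    have := hρ.2.1 a t g s a1 a2 h
    rw [htg, hρ.2.2.1] at this
    rw [this]
    conv_lhs => rw [← IsTransparent.sum_counit_smul h]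
    simp [hright]

/-- The inverse of the image of a transparent element in a localization is transparent. -/
theorem IsTransparent.of_fractions {R : Type u} [CommRing R] {A A' : Type u} [Ring A]
    [Bialgebra R A] [Ring A'] [Bialgebra R A'] {ρ : A →ₗ[R] A →ₗ[R] R} {ρ' : A' →ₗ[R] A' →ₗ[R] R}
    (hρ' : IsDQT ρ') {d : A} (hd : IsTransparent ρ d) {f : A →ₐ[R] A'}
    (hfΔ : ∀ a, Coalgebra.comul (R := R) (f a) =
      TensorProduct.map f.toLinearMap f.toLinearMap (Coalgebra.comul (R := R) a))
    (hfε : ∀ a, Coalgebra.counit (R := R) (f a) = Coalgebra.counit (R := R) a)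
    (hfρ : ∀ a b, ρ' (f a) (f b) = ρ a b) {t : A'} (hfrac : ∀ z, ∃ a k, z = f a * t ^ k)
    (htd : t * f d = 1) (hΔ : Coalgebra.comul (R := R) t = t ⊗ₜ[R] t)
    (hε : Coalgebra.counit (R := R) t = 1) : IsTransparent ρ' t := by
  have hΔd : Coalgebra.comul (R := R) (f d) = f d ⊗ₜ[R] f d := by simp [hfΔ, hd.comul]
  have hεd : Coalgebra.counit (R := R) (f d) = 1 := by rw [hfε, hd.counit]
  have hchar : ∀ χ : A' →ₐ[R] R, (∀ a, χ (f a) = Coalgebra.counit (R := R) a) →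
      ∀ z, χ z = Coalgebra.counit (R := R) z := by
    intro χ hχ z
    have ht : χ t = 1 := by
      have := congrArg χ htd
      rwa [map_mul, hχ, hd.counit, mul_one, map_one] at this
    obtain ⟨a, k, rfl⟩ := hfrac z
    rw [map_mul, map_pow, ht, hχ, Bialgebra.counit_mul, Bialgebra.counit_pow, hε, hfε]
  refine IsTransparent.of_mul_eq_one hρ' (g := f d) ?_ ?_ htd hΔ hε
  · exact hchar (hρ'.leftCharacter hΔd hεd) fun a => (hfρ d a).trans (hd.left a)
  · exact hchar (hρ'.rightCharacter hΔd hεd) fun a => (hfρ a d).trans (hd.right a)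

section AdjoinInverse

variable {R : Type u} [CommRing R] {B Q : Type u} [Ring B] [Algebra R B] [Ring Q] [Algebra R Q]
  {ι : B →ₐ[R] Q} {d : B} {t : Q}

theorem exists_eq_mul_pow_of_universal (hc : ∀ b, ι b * t = t * ι b) (hd : ι d * t = 1)
    (huniv : ∀ (C : Type u) [Ring C] [Algebra R C] (g : B →ₐ[R] C) (tc : C),
      (∀ b, g b * tc = tc * g b) → g d * tc = 1 →
        ∃! h : Q →ₐ[R] C, (∀ b, h (ι b) = g b) ∧ h t = tc) (z : Q) :
    ∃ b k, z = ι b * t ^ k := by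
  set S := fractionSubalgebra ι d t hc hd
  have hinj : Function.Injective S.val := Subtype.val_injective
  obtain ⟨f, ⟨hf, hft⟩, -⟩ := huniv S (ι.codRestrict S fun b => ⟨b, 0, by simp⟩)
    ⟨t, 1, 1, by simp⟩ (fun b => hinj (hc b)) (hinj hd)
  have htop : S = ⊤ := S.eq_top_of_retraction f <| (huniv Q ι t hc hd).unique
    ⟨fun b => by rw [AlgHom.comp_apply, hf]; rfl, by rw [AlgHom.comp_apply, hft]; rfl⟩
    ⟨fun b => rfl, rfl⟩
  have hz : z ∈ S := htop ▸ trivial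
  exact hz

end AdjoinInverse

/-- Let `B_q(M_n)` be the covariantized algebra of `O_q(M_n)` and let `d̲_q` be the
element of `B_q(M_n)` corresponding to the quantum determinant `d_q ∈ O_q(M_n)`
under the identity map of the common underlying `R`-module.  Then `d̲_q` is central
in `B_q(M_n)`, and:
(1) the covariantized algebra of `O_q(SL_n) = O_q(M_n)/(d_q − 1)` is isomorphic to
    the quotient `B_q(M_n)/(d̲_q − 1)`;
(2) the covariantized algebra of `O_q(GL_n) = O_q(M_n)[d_q⁻¹]` is isomorphic to
    `B_q(M_n)[t]/(d̲_q ⬝ t − 1)`, the algebra obtained from `B_q(M_n)` by adjoining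
    a central element `t` subject to `d̲_q ⬝ t = 1`.
Here `O_q(SL_n)` and `O_q(GL_n)` carry the descended/extended dual quasitriangular
structures, all presented algebras are axiomatised by their relations together with
their universal properties, and the covariantized algebras are realised as algebras
`BA`, `BAs`, `BGL` identified with the corresponding module via a linear equivalence
transporting the product to the covariantized product. -/
theorem covariantized_SL_GL_quotient_localization
    {R : Type u} [CommRing R] (n : ℕ) (hn : 2 ≤ n) (qr : Rˣ)
    {A : Type u} [Ring A] [Bialgebra R A] (x : Fin n → Fin n → A)
    (hx : OqMnRels n (qr ^ n) x)
    (hxuniv : ∀ (B : Type u) [Ring B] [Algebra R B] (y : Fin n → Fin n → B),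
      OqMnRels n (qr ^ n) y → ∃! f : A →ₐ[R] B, ∀ i j, f (x i j) = y i j)
    (hΔ : ∀ i j, Coalgebra.comul (R := R) (x i j) = ∑ k, x i k ⊗ₜ[R] x k j)
    (hε : ∀ i j, Coalgebra.counit (R := R) (x i j) = if i = j then (1 : R) else 0)
    (ρ : A →ₗ[R] A →ₗ[R] R) (hρ : IsDQT ρ)
    (hρx : ∀ i j k l, ρ (x i j) (x k l) = RmatVal n qr i j k l)
    (ρt : A →ₗ[R] A →ₗ[R] R) (hρt : IsCopConvInv ρ ρt)
    (cmul : A → A → A) (hcmul : CovChar ρ ρt cmul)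
    -- `BA` is the covariantized algebra `B_q(M_n)` of `O_q(M_n)`
    (BA : Type u) [Ring BA] [Algebra R BA] (φ : BA ≃ₗ[R] A)
    (hφ1 : φ 1 = 1) (hφm : ∀ a b : BA, φ (a * b) = cmul (φ a) (φ b))
    -- `As` is `O_q(SL_n) = O_q(M_n)/(d_q − 1)` with its descended structure
    (As : Type u) [Ring As] [Bialgebra R As] (xs : Fin n → Fin n → As)
    (hxs : OqMnRels n (qr ^ n) xs ∧ qdet (qr ^ n) xs = 1)
    (hxsuniv : ∀ (B : Type u) [Ring B] [Algebra R B] (y : Fin n → Fin n → B),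
      OqMnRels n (qr ^ n) y ∧ qdet (qr ^ n) y = 1 →
        ∃! f : As →ₐ[R] B, ∀ i j, f (xs i j) = y i j)
    (hΔs : ∀ i j, Coalgebra.comul (R := R) (xs i j) = ∑ k, xs i k ⊗ₜ[R] xs k j)
    (hεs : ∀ i j, Coalgebra.counit (R := R) (xs i j) = if i = j then (1 : R) else 0)
    (ρs : As →ₗ[R] As →ₗ[R] R) (hρs : IsDQT ρs)
    (hρsx : ∀ i j k l, ρs (xs i j) (xs k l) = RmatVal n qr i j k l)
    (ρts : As →ₗ[R] As →ₗ[R] R) (hρts : IsCopConvInv ρs ρts)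
    (cmuls : As → As → As) (hcmuls : CovChar ρs ρts cmuls)
    -- `BAs` is the covariantized algebra of `O_q(SL_n)`
    (BAs : Type u) [Ring BAs] [Algebra R BAs] (ψ : BAs ≃ₗ[R] As)
    (hψ1 : ψ 1 = 1) (hψm : ∀ a b : BAs, ψ (a * b) = cmuls (ψ a) (ψ b))
    -- `AGL` is `O_q(GL_n) = O_q(M_n)[d_q⁻¹]` with its extended structure
    (AGL : Type u) [Ring AGL] [Bialgebra R AGL] (xg : Fin n → Fin n → AGL) (tg : AGL)
    (hxg : OqMnRels n (qr ^ n) xg ∧ (∀ i j, tg * xg i j = xg i j * tg) ∧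
      tg * qdet (qr ^ n) xg = 1 ∧ qdet (qr ^ n) xg * tg = 1)
    (hxguniv : ∀ (B : Type u) [Ring B] [Algebra R B]
        (y : Fin n → Fin n → B) (ty : B),
      (OqMnRels n (qr ^ n) y ∧ (∀ i j, ty * y i j = y i j * ty) ∧
        ty * qdet (qr ^ n) y = 1 ∧ qdet (qr ^ n) y * ty = 1) →
        ∃! f : AGL →ₐ[R] B, (∀ i j, f (xg i j) = y i j) ∧ f tg = ty)
    (hΔg : ∀ i j, Coalgebra.comul (R := R) (xg i j) = ∑ k, xg i k ⊗ₜ[R] xg k j)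
    (hεg : ∀ i j, Coalgebra.counit (R := R) (xg i j) = if i = j then (1 : R) else 0)
    (hΔt : Coalgebra.comul (R := R) tg = tg ⊗ₜ[R] tg)
    (hεt : Coalgebra.counit (R := R) tg = 1)
    (ρg : AGL →ₗ[R] AGL →ₗ[R] R) (hρg : IsDQT ρg)
    (hρgx : ∀ i j k l, ρg (xg i j) (xg k l) = RmatVal n qr i j k l)
    (ρtg : AGL →ₗ[R] AGL →ₗ[R] R) (hρtg : IsCopConvInv ρg ρtg)
    (cmulg : AGL → AGL → AGL) (hcmulg : CovChar ρg ρtg cmulg)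
    -- `BGL` is the covariantized algebra of `O_q(GL_n)`
    (BGL : Type u) [Ring BGL] [Algebra R BGL] (ψg : BGL ≃ₗ[R] AGL)
    (hψg1 : ψg 1 = 1) (hψgm : ∀ a b : BGL, ψg (a * b) = cmulg (ψg a) (ψg b))
    -- `Q2` is `B_q(M_n)[t]`, obtained from `B_q(M_n)` by adjoining a central
    -- element `t` subject to `d̲_q ⬝ t = 1`
    (Q2 : Type u) [Ring Q2] [Algebra R Q2] (ι : BA →ₐ[R] Q2) (tq : Q2)
    (hQ2c : ∀ b : BA, ι b * tq = tq * ι b)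
    (hQ2r : ι (φ.symm (qdet (qr ^ n) x)) * tq = 1)
    (hQ2univ : ∀ (C : Type u) [Ring C] [Algebra R C] (g : BA →ₐ[R] C) (tc : C),
      (∀ b : BA, g b * tc = tc * g b) → g (φ.symm (qdet (qr ^ n) x)) * tc = 1 →
        ∃! h : Q2 →ₐ[R] C, (∀ b : BA, h (ι b) = g b) ∧ h tq = tc) :
    (∀ b : BA, φ.symm (qdet (qr ^ n) x) * b = b * φ.symm (qdet (qr ^ n) x)) ∧
    (∃ f : RingQuot (fun a b : BA => a = φ.symm (qdet (qr ^ n) x) ∧ b = 1) ≃ₐ[R] BAs,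
      ∀ i j, f (RingQuot.mkAlgHom R _ (φ.symm (x i j))) = ψ.symm (xs i j)) ∧
    (∃ f : Q2 ≃ₐ[R] BGL,
      (∀ i j, f (ι (φ.symm (x i j))) = ψg.symm (xg i j)) ∧ f tq = ψg.symm tg) := by
  have htop := adjoin_eq_top_of_universal hx hxuniv
  have hd := qdet_isTransparent hx htop hΔ hε hρ hρx
  have hcomm := hd.commute hρ
  set d := qdet (qr ^ n) x with hd_def
  have hφd : ∀ b, φ (φ.symm d * b) = d * φ b := fun b => by
    rw [hφm, LinearEquiv.apply_symm_apply, hd.cmul_left hρt hcmul]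
  have hφd' : ∀ b, φ (b * φ.symm d) = φ b * d := fun b => by
    rw [hφm, LinearEquiv.apply_symm_apply, hd.cmul_right hρt hcmul]
  refine ⟨fun b => φ.injective ?_, ?_, ?_⟩
  · rw [hφd, hφd', hcomm]
  · obtain ⟨π, hπ, -⟩ := hxuniv As xs hxs.1
    obtain ⟨hsurj, hker⟩ := specialLinear_map_surjective_and_ker hx htop hcomm hxs hxsuniv hπ
    obtain ⟨F, hF⟩ := exists_covariantized_algHom htop hΔ hε hΔs hεs hρ hρs hρx hρsx hρt hρts
      hcmul hcmuls φ hφ1 hφm ψ hψ1 hψm hπ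
    have hπd : π d = 1 := by
      rw [hd_def, qdet_map]
      simp only [hπ, hxs.2]
    have hrel : ∀ ⦃a b : BA⦄, (a = φ.symm d ∧ b = 1) → F a = F b := by
      rintro _ _ ⟨rfl, rfl⟩
      refine ψ.injective ?_
      rw [hF, hF, LinearEquiv.apply_symm_apply, hφ1, hπd, map_one]
    let r : BA → BA → Prop := fun a b => a = φ.symm d ∧ b = 1
    have hlift : ∀ b, RingQuot.liftAlgHom R ⟨F, hrel⟩ (RingQuot.mkAlgHom R r b) = F b :=
      RingQuot.liftAlgHom_mkAlgHom_apply R F hrel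
    have hmk : RingQuot.mkAlgHom R r (φ.symm d) = 1 := by
      rw [RingQuot.mkAlgHom_rel R (s := r) (show r (φ.symm d) 1 from ⟨rfl, rfl⟩), map_one]
    refine ⟨AlgEquiv.ofBijective (RingQuot.liftAlgHom R ⟨F, hrel⟩) ⟨?_, fun z => ?_⟩, ?_⟩
    · refine (injective_iff_map_eq_zero _).2 fun z hz => ?_
      obtain ⟨b, rfl⟩ := RingQuot.mkAlgHom_surjective R r z
      rw [hlift] at hz
      obtain ⟨c, hc⟩ := hker (φ b) (by rw [← hF, hz, map_zero])
      have hb : b = φ.symm c * φ.symm d - φ.symm c := by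
        refine φ.injective ?_
        rw [map_sub, hφd', LinearEquiv.apply_symm_apply, ← hc, mul_sub, mul_one]
      rw [hb, map_sub, map_mul, hmk, mul_one, sub_self]
    · obtain ⟨a, ha⟩ := hsurj (ψ z)
      refine ⟨RingQuot.mkAlgHom R r (φ.symm a), ψ.injective ?_⟩
      rw [hlift, hF, LinearEquiv.apply_symm_apply, ha]
    · intro i j
      refine (hlift _).trans (ψ.injective ?_)
      simp [hF, hπ]
  · obtain ⟨g, hg, -⟩ := hxuniv AGL xg hxg.1
    obtain ⟨hfrac, hker⟩ := generalLinear_map_fraction_and_ker hx htop hcomm hxg hxguniv hg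
    obtain ⟨G, hG⟩ := exists_covariantized_algHom htop hΔ hε hΔg hεg hρ hρg hρx hρgx hρt hρtg
      hcmul hcmulg φ hφ1 hφm ψg hψg1 hψgm hg
    obtain ⟨hgΔ, hgε⟩ := comul_counit_map_of_generators htop hΔ hε hΔg hεg hg
    have hgd : g d = qdet (qr ^ n) xg := by
      rw [hd_def, qdet_map]
      simp only [hg]
    have htgd : tg * g d = 1 := by rw [hgd, hxg.2.2.1]
    have hdtg : g d * tg = 1 := by rw [hgd, hxg.2.2.2]
    have ht : IsTransparent ρg tg := IsTransparent.of_fractions hρg hd hgΔ hgε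
      (hρ.map_eq hρg htop hΔ hε hgΔ hgε fun i j k l => by simp only [hg, hρx, hρgx])
      hfrac htgd hΔt hεt
    have hψt : ∀ b, ψg (b * ψg.symm tg) = ψg b * tg := fun b => by
      rw [hψgm, LinearEquiv.apply_symm_apply, ht.cmul_right hρtg hcmulg]
    have hψt' : ∀ b, ψg (ψg.symm tg * b) = tg * ψg b := fun b => by
      rw [hψgm, LinearEquiv.apply_symm_apply, ht.cmul_left hρtg hcmulg]
    have hψtk : ∀ k b, ψg (b * ψg.symm tg ^ k) = ψg b * tg ^ k := by
      intro k
      induction k with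
      | zero => simp
      | succ k ih => intro b; rw [pow_succ, ← mul_assoc, hψt, ih, pow_succ, mul_assoc]
    have hφdk : ∀ k b, φ (φ.symm d ^ k * b) = d ^ k * φ b := by
      intro k
      induction k with
      | zero => simp
      | succ k ih => intro b; rw [pow_succ, mul_assoc, ih, hφd, pow_succ, mul_assoc]
    obtain ⟨f, ⟨hfι, hft⟩, -⟩ := hQ2univ BGL G (ψg.symm tg)
      (fun b => ψg.injective (by rw [hψt, hψt', ht.commute hρg]))
      (ψg.injective (by rw [hψt, hG, LinearEquiv.apply_symm_apply, hdtg, hψg1]))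
    have hf : ∀ b k, ψg (f (ι b * tq ^ k)) = g (φ b) * tg ^ k := fun b k => by
      rw [map_mul, map_pow, hfι, hft, hψtk, hG]
    refine ⟨AlgEquiv.ofBijective f ⟨?_, fun z => ?_⟩, fun i j => (hfι _).trans (ψg.injective ?_), hft⟩
    · refine (injective_iff_map_eq_zero f).2 fun z hz => ?_
      obtain ⟨b, k, rfl⟩ := exists_eq_mul_pow_of_universal hQ2c hQ2r hQ2univ z
      have h0 : g (φ b) * tg ^ k = 0 := by rw [← hf, hz, map_zero]
      have h1 : g (φ b) = 0 := by
        have hpow : tg ^ k * g d ^ k = 1 := by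
          rw [← (show Commute tg (g d) from htgd.trans hdtg.symm).mul_pow, htgd, one_pow]
        rw [← mul_one (g (φ b)), ← hpow, ← mul_assoc, h0, zero_mul]
      obtain ⟨m, hm⟩ := hker _ h1
      have h2 : φ.symm d ^ m * b = 0 := φ.injective (by rw [hφdk, hm, map_zero])
      have h3 : ι b = 0 := by
        have hpow : tq ^ m * ι (φ.symm d) ^ m = 1 := by
          rw [← (show Commute tq (ι (φ.symm d)) from (hQ2c _).symm).mul_pow, ← hQ2c, hQ2r, one_pow]
        rw [← one_mul (ι b), ← hpow, mul_assoc, ← map_pow, ← map_mul, h2, map_zero, mul_zero]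
      rw [h3, zero_mul]
    · obtain ⟨a, k, ha⟩ := hfrac (ψg z)
      refine ⟨ι (φ.symm a) * tq ^ k, ψg.injective ?_⟩
      rw [hf, LinearEquiv.apply_symm_apply, ha]
    · simp [hG, hg]

end
end

section
/- Let A be a Hopf algebra over a commutative ring R equipped with a dual quasitriangular structure 𝓡, with 𝓡⁻¹(a, b) := 𝓡(S(a), b) its convolution inverse, and let ⬝ denote the covariantized product on A. Then for all a, b ∈ A the original product of A is recovered by the formula a b = 𝓡⁻¹(a₍₁₎, b₍₁₎) 𝓡(a₍₃₎, b₍₂₎) (a₍₂₎ ⬝ b₍₃₎) = 𝓡(S(a₍₁₎), b₍₁₎) 𝓡(a₍₃₎, b₍₂₎) (a₍₂₎ ⬝ b₍₃₎) (sums over Sweedler components implicit). -/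
open scoped TensorProduct BigOperators

noncomputable section

universe u

/-- `cmul` is the covariantized product
`a ⬝ b = a₍₂₎ b₍₃₎ 𝓡(a₍₃₎, S(b₍₁₎)) 𝓡(a₍₁₎, b₍₂₎)` of the dual quasitriangular Hopf
algebra `(A, ρ)`, expressed via finite representations of the iterated
comultiplication. -/
def CovCharS {R : Type u} [CommRing R] {A : Type u} [Ring A] [HopfAlgebra R A]
    (ρ : A →ₗ[R] A →ₗ[R] R) (cmul : A → A → A) : Prop :=
  ∀ (a b : A) (s t : Finset ℕ) (a1 a2 a3 b1 b2 b3 : ℕ → A),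
    comul2 (R := R) a = ∑ i ∈ s, a1 i ⊗ₜ[R] (a2 i ⊗ₜ[R] a3 i) →
    comul2 (R := R) b = ∑ j ∈ t, b1 j ⊗ₜ[R] (b2 j ⊗ₜ[R] b3 j) →
    cmul a b = ∑ i ∈ s, ∑ j ∈ t,
      (ρ (a3 i) (HopfAlgebra.antipode (R := R) (b1 j)) * ρ (a1 i) (b2 j)) • (a2 i * b3 j)

open Coalgebra WithConv

/-- A finite sum over an arbitrary index type can be reindexed by natural numbers. -/
lemma exists_finset_nat_sum_eq {ι X M : Type*} [Nonempty X] [AddCommMonoid M]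
    (F : X → M) (s : Finset ι) (f : ι → X) :
    ∃ (t : Finset ℕ) (g : ℕ → X), ∑ i ∈ s, F (f i) = ∑ n ∈ t, F (g n) := by
  classical
  let e : s ↪ ℕ := s.equivFin.toEmbedding.trans Fin.valEmbedding
  refine ⟨Finset.univ.map e,
    Function.extend e (fun i : s => f i) (fun _ => Classical.arbitrary X), ?_⟩
  rw [Finset.sum_map, ← Finset.sum_coe_sort s]
  exact Finset.sum_congr rfl fun i _ => by rw [e.injective.extend_apply]

section Bialgebra

variable {R : Type u} [CommRing R] {A : Type u} [Ring A] [Bialgebra R A]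

lemma exists_comul_eq_sum (a : A) : ∃ (s : Finset ℕ) (a1 a2 : ℕ → A),
    comul (R := R) a = ∑ i ∈ s, a1 i ⊗ₜ[R] a2 i := by
  obtain ⟨t, g, h⟩ := exists_finset_nat_sum_eq (fun p : A × A => p.1 ⊗ₜ[R] p.2)
    (ℛ R a).index fun i => ((ℛ R a).left i, (ℛ R a).right i)
  exact ⟨t, fun n => (g n).1, fun n => (g n).2, (ℛ R a).eq.symm.trans h⟩

lemma exists_comul2_eq_sum (a : A) : ∃ (s : Finset ℕ) (a1 a2 a3 : ℕ → A),
    comul2 (R := R) a = ∑ i ∈ s, a1 i ⊗ₜ[R] (a2 i ⊗ₜ[R] a3 i) := by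
  have key : comul2 (R := R) a = ∑ p ∈ (ℛ R a).index.sigma fun i => (ℛ R ((ℛ R a).right i)).index,
      (ℛ R a).left p.1 ⊗ₜ[R] ((ℛ R ((ℛ R a).right p.1)).left p.2 ⊗ₜ[R]
        (ℛ R ((ℛ R a).right p.1)).right p.2) := by
    simp only [Finset.sum_sigma, ← TensorProduct.tmul_sum, Repr.eq]
    rw [comul2, LinearMap.comp_apply]
    nth_rw 1 [← (ℛ R a).eq]
    simp
  obtain ⟨t, g, h⟩ := exists_finset_nat_sum_eq
    (fun p : A × A × A => p.1 ⊗ₜ[R] (p.2.1 ⊗ₜ[R] p.2.2))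
    ((ℛ R a).index.sigma fun i => (ℛ R ((ℛ R a).right i)).index)
    fun p => ((ℛ R a).left p.1, (ℛ R ((ℛ R a).right p.1)).left p.2,
        (ℛ R ((ℛ R a).right p.1)).right p.2)
  exact ⟨t, fun n => (g n).1, fun n => (g n).2.1, fun n => (g n).2.2, key.trans h⟩

/-- The threefold convolution product, evaluated on Sweedler components. -/
lemma convMul_convMul_apply_of_comul2 {B : Type*} [Ring B] [Algebra R B]
    (f g h : WithConv (A →ₗ[R] B)) {b : A} {t : Finset ℕ} {b1 b2 b3 : ℕ → A}
    (hb : comul2 (R := R) b = ∑ j ∈ t, b1 j ⊗ₜ[R] (b2 j ⊗ₜ[R] b3 j)) :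
    (f * (g * h)) b = ∑ j ∈ t, f (b1 j) * (g (b2 j) * h (b3 j)) := by
  have key : (f * (g * h)) b = LinearMap.mul' R B (TensorProduct.map f.ofConv
      (LinearMap.mul' R B ∘ₗ TensorProduct.map g.ofConv h.ofConv) (comul2 (R := R) b)) := by
    rw [comul2, LinearMap.comp_apply, ← LinearMap.comp_apply (TensorProduct.map _ _),
      ← TensorProduct.map_comp]
    rfl
  rw [key, hb]
  simp

/-- The left coregular action `a ↦ f(a₍₁₎) a₍₂₎` of a functional `f`. -/
def coactLeft : (A →ₗ[R] R) →ₗ[R] Module.End R A where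
  toFun f := (TensorProduct.lid R A).toLinearMap ∘ₗ f.rTensor A ∘ₗ comul
  map_add' f g := by ext; simp [LinearMap.rTensor_add]
  map_smul' r f := by ext; simp [LinearMap.rTensor_smul]

/-- The right coregular action `a ↦ g(a₍₂₎) a₍₁₎` of a functional `g`. -/
def coactRight : (A →ₗ[R] R) →ₗ[R] Module.End R A where
  toFun g := (TensorProduct.rid R A).toLinearMap ∘ₗ g.lTensor A ∘ₗ comul
  map_add' f g := by ext; simp [LinearMap.lTensor_add]
  map_smul' r f := by ext; simp [LinearMap.lTensor_smul]

lemma coactLeft_apply_eq_sum {ι : Type*} (f : A →ₗ[R] R) {a : A} (r : Repr R a ι) :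
    coactLeft f a = ∑ i ∈ r.index, f (r.left i) • r.right i := by
  simp [coactLeft, ← r.eq]

lemma coactRight_apply_eq_sum {ι : Type*} (g : A →ₗ[R] R) {a : A} (r : Repr R a ι) :
    coactRight g a = ∑ i ∈ r.index, g (r.right i) • r.left i := by
  simp [coactRight, ← r.eq]

lemma coactLeft_counit : coactLeft (counit : A →ₗ[R] R) = 1 := by
  ext a; simp [coactLeft]

lemma coactRight_counit : coactRight (counit : A →ₗ[R] R) = 1 := by
  ext a; simp [coactRight]

lemma coactLeft_mul_coactLeft (f g : A →ₗ[R] R) :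
    coactLeft f * coactLeft g = coactLeft (toConv g * toConv f).ofConv := by
  ext a
  have h := congrArg ((TensorProduct.lid R A).toLinearMap ∘ₗ TensorProduct.map g
      ((TensorProduct.lid R A).toLinearMap ∘ₗ f.rTensor A))
    (sum_tmul_tmul_eq (ℛ R a) (fun i => ℛ R ((ℛ R a).left i)) fun i => ℛ R ((ℛ R a).right i))
  rw [Module.End.mul_apply, coactLeft_apply_eq_sum g (ℛ R a), coactLeft_apply_eq_sum _ (ℛ R a)]
  simp only [map_sum, map_smul]
  simp only [fun i => coactLeft_apply_eq_sum f (ℛ R ((ℛ R a).right i)),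
    fun i => (ℛ R ((ℛ R a).left i)).convMul_apply (toConv g) (toConv f),
    Finset.smul_sum, Finset.sum_smul, smul_smul]
  simpa [smul_smul, mul_comm] using h.symm

lemma coactRight_mul_coactRight (f g : A →ₗ[R] R) :
    coactRight f * coactRight g = coactRight (toConv f * toConv g).ofConv := by
  ext a
  have h := congrArg ((TensorProduct.rid R A).toLinearMap ∘ₗ
      (LinearMap.mul' R R ∘ₗ TensorProduct.map f g).lTensor A)
    (sum_tmul_tmul_eq (ℛ R a) (fun i => ℛ R ((ℛ R a).left i)) fun i => ℛ R ((ℛ R a).right i))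
  rw [Module.End.mul_apply, coactRight_apply_eq_sum g (ℛ R a), coactRight_apply_eq_sum _ (ℛ R a)]
  simp only [map_sum, map_smul]
  simp only [fun i => coactRight_apply_eq_sum f (ℛ R ((ℛ R a).left i)),
    fun i => (ℛ R ((ℛ R a).right i)).convMul_apply (toConv f) (toConv g),
    Finset.smul_sum, Finset.sum_smul, smul_smul]
  simpa [mul_comm] using h

/-- The left and right coregular actions commute. -/
lemma coactLeft_mul_coactRight (f g : A →ₗ[R] R) :
    coactLeft f * coactRight g = coactRight g * coactLeft f := by
  ext a
  have h := congrArg ((TensorProduct.lid R A).toLinearMap ∘ₗ TensorProduct.map f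
      ((TensorProduct.rid R A).toLinearMap ∘ₗ g.lTensor A))
    (sum_tmul_tmul_eq (ℛ R a) (fun i => ℛ R ((ℛ R a).left i)) fun i => ℛ R ((ℛ R a).right i))
  rw [Module.End.mul_apply, Module.End.mul_apply, coactRight_apply_eq_sum g (ℛ R a),
    coactLeft_apply_eq_sum f (ℛ R a)]
  simp only [map_sum, map_smul]
  simp only [fun i => coactLeft_apply_eq_sum f (ℛ R ((ℛ R a).left i)),
    fun i => coactRight_apply_eq_sum g (ℛ R ((ℛ R a).right i)), Finset.smul_sum, smul_smul]
  simpa [smul_smul, mul_comm] using h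

lemma coactRight_coactLeft_apply (f g : A →ₗ[R] R) {a : A} {s : Finset ℕ} {a1 a2 a3 : ℕ → A}
    (ha : comul2 (R := R) a = ∑ i ∈ s, a1 i ⊗ₜ[R] (a2 i ⊗ₜ[R] a3 i)) :
    coactRight g (coactLeft f a) = ∑ i ∈ s, (f (a1 i) * g (a3 i)) • a2 i := by
  have key : coactRight g (coactLeft f a) = TensorProduct.lid R A (TensorProduct.map f
      ((TensorProduct.rid R A).toLinearMap ∘ₗ g.lTensor A) (comul2 (R := R) a)) := by
    rw [comul2, LinearMap.comp_apply, ← LinearMap.comp_apply (TensorProduct.map _ _),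
      ← TensorProduct.map_comp, coactLeft_apply_eq_sum f (ℛ R a)]
    conv_rhs => rw [← (ℛ R a).eq]
    simp [coactRight]
  rw [key, ha]
  simp [smul_smul, mul_comm]

end Bialgebra

section DualQuasitriangular

variable {R : Type u} [CommRing R] {A : Type u} [Ring A]

lemma IsDQT.apply_mul_left [Bialgebra R A] {ρ : A →ₗ[R] A →ₗ[R] R} (hρ : IsDQT ρ) (a b c : A) :
    ρ (a * b) c = (toConv (ρ a) * toConv (ρ b)) c := by
  obtain ⟨s, c1, c2, hc⟩ := exists_comul_eq_sum (R := R) c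
  rw [hρ.1 a b c s c1 c2 hc]
  simp [hc]

lemma IsDQT.flip_mul [Bialgebra R A] {ρ : A →ₗ[R] A →ₗ[R] R} (hρ : IsDQT ρ) (b c : A) :
    ρ.flip (b * c) = (toConv (ρ.flip c) * toConv (ρ.flip b)).ofConv := by
  ext a
  obtain ⟨s, a1, a2, ha⟩ := exists_comul_eq_sum (R := R) a
  rw [LinearMap.flip_apply, hρ.2.1 a b c s a1 a2 ha]
  simp [ha]

variable [HopfAlgebra R A]

/-- `b ↦ (a ↦ 𝓡(a₍₂₎, b) a₍₁₎)`, with values in the opposite of the endomorphism algebra. -/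
def convRight (ρ : A →ₗ[R] A →ₗ[R] R) : WithConv (A →ₗ[R] (Module.End R A)ᵐᵒᵖ) :=
  toConv ((MulOpposite.opLinearEquiv R).toLinearMap ∘ₗ coactRight ∘ₗ ρ.flip)

/-- `b ↦ (a ↦ 𝓡(a₍₂₎, S(b)) a₍₁₎)`, with values in the opposite of the endomorphism algebra. -/
def convRightAntipode (ρ : A →ₗ[R] A →ₗ[R] R) : WithConv (A →ₗ[R] (Module.End R A)ᵐᵒᵖ) :=
  toConv ((MulOpposite.opLinearEquiv R).toLinearMap ∘ₗ coactRight ∘ₗ ρ.flip ∘ₗ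
    HopfAlgebra.antipode R)

/-- `b ↦ (a ↦ 𝓡(a₍₁₎, b) a₍₂₎)`, with values in the opposite of the endomorphism algebra. -/
def convLeft (ρ : A →ₗ[R] A →ₗ[R] R) : WithConv (A →ₗ[R] (Module.End R A)ᵐᵒᵖ) :=
  toConv ((MulOpposite.opLinearEquiv R).toLinearMap ∘ₗ coactLeft ∘ₗ ρ.flip)

/-- `b ↦ (a ↦ a b)`, with values in the opposite of the endomorphism algebra. -/
def convMulRight (R A : Type u) [CommRing R] [Ring A] [HopfAlgebra R A] :
    WithConv (A →ₗ[R] (Module.End R A)ᵐᵒᵖ) :=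
  toConv ((MulOpposite.opLinearEquiv R).toLinearMap ∘ₗ (LinearMap.mul R A).flip)

lemma convRight_mul_convRightAntipode {ρ : A →ₗ[R] A →ₗ[R] R} (hρ : IsDQT ρ) :
    convRight ρ * convRightAntipode ρ = 1 := by
  ext1
  ext1 b
  have h1 : ρ.flip 1 = counit := LinearMap.ext hρ.2.2.1
  apply MulOpposite.unop_injective
  rw [(ℛ R b).convMul_apply, LinearMap.convOne_apply]
  simp only [convRight, convRightAntipode, LinearMap.comp_apply, LinearEquiv.coe_coe,
    MulOpposite.coe_opLinearEquiv, ← MulOpposite.op_mul, coactRight_mul_coactRight,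
    ← hρ.flip_mul, Finset.unop_sum, MulOpposite.unop_op, ← map_sum,
    HopfAlgebra.sum_mul_antipode_eq_smul, map_smul, h1, coactRight_counit]
  simp [Algebra.algebraMap_eq_smul_one]

lemma convLeft_comp_antipode_mul_convLeft {ρ : A →ₗ[R] A →ₗ[R] R} (hρ : IsDQT ρ) :
    convLeft (ρ ∘ₗ HopfAlgebra.antipode R) * convLeft ρ = 1 := by
  ext1
  ext1 b
  have key : ∑ i ∈ (ℛ R b).index,
      (toConv ((ρ ∘ₗ HopfAlgebra.antipode R).flip ((ℛ R b).left i)) *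
        toConv (ρ.flip ((ℛ R b).right i))).ofConv = counit (R := R) b • counit := by
    ext a
    simp only [LinearMap.sum_apply, (ℛ R a).convMul_apply]
    rw [Finset.sum_comm]
    trans ρ (∑ i ∈ (ℛ R a).index, HopfAlgebra.antipode R ((ℛ R a).left i) * (ℛ R a).right i) b
    · rw [map_sum, LinearMap.sum_apply]
      refine Finset.sum_congr rfl fun i _ => ?_
      rw [hρ.apply_mul_left, (ℛ R b).convMul_apply]
      rfl
    · simp [HopfAlgebra.sum_antipode_mul_eq_smul, hρ.2.2.2.1, mul_comm]
  apply MulOpposite.unop_injective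
  rw [(ℛ R b).convMul_apply, LinearMap.convOne_apply]
  simp only [convLeft, LinearMap.comp_apply, LinearEquiv.coe_coe,
    MulOpposite.coe_opLinearEquiv, ← MulOpposite.op_mul, coactLeft_mul_coactLeft,
    Finset.unop_sum, MulOpposite.unop_op, ← map_sum, key, map_smul, coactLeft_counit]
  simp [Algebra.algebraMap_eq_smul_one]

/-- The covariantized product as a threefold convolution product. -/
lemma CovCharS.eq_conv {ρ : A →ₗ[R] A →ₗ[R] R} {cmul : A → A → A} (hcmul : CovCharS ρ cmul)
    (a b : A) :
    cmul a b = ((convRightAntipode ρ * (convLeft ρ * convMulRight R A)) b).unop a := by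
  obtain ⟨s, a1, a2, a3, ha⟩ := exists_comul2_eq_sum (R := R) a
  obtain ⟨t, b1, b2, b3, hb⟩ := exists_comul2_eq_sum (R := R) b
  rw [hcmul a b s t a1 a2 a3 b1 b2 b3 ha hb, convMul_convMul_apply_of_comul2 _ _ _ hb,
    Finset.sum_comm, Finset.unop_sum, LinearMap.sum_apply]
  refine Finset.sum_congr rfl fun j _ => ?_
  trans coactLeft (ρ.flip (b2 j)) (coactRight (ρ.flip (HopfAlgebra.antipode R (b1 j))) a) * b3 j
  · rw [← Module.End.mul_apply, coactLeft_mul_coactRight, Module.End.mul_apply,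
      coactRight_coactLeft_apply _ _ ha, Finset.sum_mul]
    simp [mul_comm]
  · rfl

end DualQuasitriangular

/-- For a dual quasitriangular Hopf algebra `(A, 𝓡)` with covariantized product `⬝`,
the original product is recovered by
`a b = 𝓡⁻¹(a₍₁₎, b₍₁₎) 𝓡(a₍₃₎, b₍₂₎) (a₍₂₎ ⬝ b₍₃₎) = 𝓡(S(a₍₁₎), b₍₁₎) 𝓡(a₍₃₎, b₍₂₎) (a₍₂₎ ⬝ b₍₃₎)`,
where `𝓡⁻¹(a, b) = 𝓡(S(a), b)` is the convolution inverse of `𝓡`. -/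
theorem mul_eq_covariantized_twist
    {R : Type u} [CommRing R] {A : Type u} [Ring A] [HopfAlgebra R A]
    (ρ : A →ₗ[R] A →ₗ[R] R) (hρ : IsDQT ρ)
    (cmul : A → A → A) (hcmul : CovCharS ρ cmul) :
    ∀ (a b : A) (s t : Finset ℕ) (a1 a2 a3 b1 b2 b3 : ℕ → A),
      comul2 (R := R) a = ∑ i ∈ s, a1 i ⊗ₜ[R] (a2 i ⊗ₜ[R] a3 i) →
      comul2 (R := R) b = ∑ j ∈ t, b1 j ⊗ₜ[R] (b2 j ⊗ₜ[R] b3 j) →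
      a * b = ∑ i ∈ s, ∑ j ∈ t,
        (ρ (HopfAlgebra.antipode (R := R) (a1 i)) (b1 j) * ρ (a3 i) (b2 j)) •
          cmul (a2 i) (b3 j) := by
  intro a b s t a1 a2 a3 b1 b2 b3 ha hb
  have h : convLeft (ρ ∘ₗ HopfAlgebra.antipode R) * (convRight ρ *
      (convRightAntipode ρ * (convLeft ρ * convMulRight R A))) = convMulRight R A := by
    rw [← mul_assoc (convRight ρ), convRight_mul_convRightAntipode hρ, one_mul, ← mul_assoc,
      convLeft_comp_antipode_mul_convLeft hρ, one_mul]
  trans (convMulRight R A b).unop a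
  · rfl
  rw [← h, convMul_convMul_apply_of_comul2 _ _ _ hb, Finset.sum_comm, Finset.unop_sum,
    LinearMap.sum_apply]
  refine Finset.sum_congr rfl fun j _ => ?_
  simp only [hcmul.eq_conv, MulOpposite.unop_mul, Module.End.mul_apply, ← map_smul, ← map_sum]
  exact congrArg _ (coactRight_coactLeft_apply ((ρ ∘ₗ HopfAlgebra.antipode R).flip (b1 j))
    (ρ.flip (b2 j)) ha)

end
end

section
/- Let A be a Hopf algebra over a commutative ring R equipped with a dual quasitriangular structure 𝓡, and let ⬝ denote the covariantized product on A. If g ∈ A is grouplike, i.e. Δ(g) = g ⊗ g and ε(g) = 1, then g is invertible in the covariantized algebra underline(A); explicitly, g ⬝ S(g) = 1 = S(g) ⬝ g. -/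
open scoped TensorProduct BigOperators

noncomputable section

universe u

theorem IsGroupLikeElem.comul2_eq {R : Type u} [CommRing R] {A : Type u} [Ring A]
    [Bialgebra R A] {a : A} (ha : IsGroupLikeElem R a) :
    comul2 (R := R) a = a ⊗ₜ[R] (a ⊗ₜ[R] a) := by
  simp [comul2, ha.comul_eq_tmul_self]

theorem IsDQT.apply_antipode_mul_apply {R : Type u} [CommRing R] {A : Type u} [Ring A]
    [HopfAlgebra R A] {ρ : A →ₗ[R] A →ₗ[R] R} (hρ : IsDQT ρ) {a b : A}
    (ha : IsGroupLikeElem R a) (hb : IsGroupLikeElem R b) :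
    ρ a (HopfAlgebra.antipode R b) * ρ a b = 1 := by
  obtain ⟨-, hmul, hone, -, -⟩ := hρ
  have h := hmul a b (HopfAlgebra.antipode R b) {0} (fun _ => a) (fun _ => a)
    (by simp [ha.comul_eq_tmul_self])
  rw [hb.mul_antipode_cancel, hone, ha.counit_eq_one, Finset.sum_singleton] at h
  exact h.symm

/-- On grouplike elements the covariantized product agrees with the original product. -/
theorem CovCharS.apply_eq_mul {R : Type u} [CommRing R] {A : Type u} [Ring A]
    [HopfAlgebra R A] {ρ : A →ₗ[R] A →ₗ[R] R} (hρ : IsDQT ρ) {cmul : A → A → A}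
    (hcmul : CovCharS ρ cmul) {a b : A} (ha : IsGroupLikeElem R a)
    (hb : IsGroupLikeElem R b) : cmul a b = a * b := by
  rw [hcmul a b {0} {0} (fun _ => a) (fun _ => a) (fun _ => a) (fun _ => b) (fun _ => b)
    (fun _ => b) (by simp [ha.comul2_eq]) (by simp [hb.comul2_eq])]
  simp [hρ.apply_antipode_mul_apply ha hb]

/-- If `g` is a grouplike element of a dual quasitriangular Hopf algebra `(A, 𝓡)`,
then `g` is invertible in the covariantized algebra: explicitly
`g ⬝ S(g) = 1 = S(g) ⬝ g`. -/
theorem grouplike_isUnit_covariantized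
    {R : Type u} [CommRing R] {A : Type u} [Ring A] [HopfAlgebra R A]
    (ρ : A →ₗ[R] A →ₗ[R] R) (hρ : IsDQT ρ)
    (cmul : A → A → A) (hcmul : CovCharS ρ cmul)
    (g : A) (hg : Coalgebra.comul (R := R) g = g ⊗ₜ[R] g)
    (hg' : Coalgebra.counit (R := R) g = 1) :
    cmul g (HopfAlgebra.antipode (R := R) g) = 1 ∧
      cmul (HopfAlgebra.antipode (R := R) g) g = 1 := by
  have h : IsGroupLikeElem R g := ⟨hg', hg⟩
  exact ⟨(hcmul.apply_eq_mul hρ h h.antipode).trans h.mul_antipode_cancel,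
    (hcmul.apply_eq_mul hρ h.antipode h).trans h.antipode_mul_cancel⟩

end
end

section
/- Let n ≥ 2 and R a commutative ring with invertible element q^{1/n}, q := (q^{1/n})^n. In the common underlying R-module of O_q(M_n) and B_q(M_n), for all 1 ≤ k, l ≤ n with k ≠ l and every integer N ≥ 0: (x^k_l)^N = q^{−N(N−1)/2} (x^k_l)^{⬝N}, where (x^k_l)^N is the N-th power with respect to the original product of O_q(M_n) and (x^k_l)^{⬝N} is the N-th power with respect to the covariantized product ⬝. -/
open scoped TensorProduct BigOperators

noncomputable section

universe u

section LeftAction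

variable {R : Type u} [CommRing R] {A : Type u} [Ring A]

/-- Contraction of the first tensor factor with a linear form: `a ⊗ b ↦ f a • b`. -/
def contractFst [Algebra R A] (f : A →ₗ[R] R) : A ⊗[R] A →ₗ[R] A :=
  (TensorProduct.lid R A).toLinearMap.comp (f.rTensor A)

@[simp]
theorem contractFst_tmul [Algebra R A] (f : A →ₗ[R] R) (a b : A) :
    contractFst f (a ⊗ₜ[R] b) = f a • b := by
  simp [contractFst]

/-- The action `b ↦ f(b₍₁₎) b₍₂₎` of a linear form on a bialgebra. -/
def formAct [Bialgebra R A] (f : A →ₗ[R] R) : A →ₗ[R] A :=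
  (contractFst f).comp (Coalgebra.comul (R := R))

theorem formAct_apply [Bialgebra R A] (f : A →ₗ[R] R) (b : A) :
    formAct f b = contractFst f (Coalgebra.comul (R := R) b) := rfl

/-- Contraction of the first two tensor factors: `a ⊗ (b ⊗ c) ↦ g a • f b • c`. -/
def contractFstTwo [Algebra R A] (g f : A →ₗ[R] R) : A ⊗[R] (A ⊗[R] A) →ₗ[R] A :=
  (TensorProduct.lid R A).toLinearMap.comp (TensorProduct.map g (contractFst f))

@[simp]
theorem contractFstTwo_tmul [Algebra R A] (g f : A →ₗ[R] R) (a b c : A) :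
    contractFstTwo g f (a ⊗ₜ[R] (b ⊗ₜ[R] c)) = g a • f b • c := by
  simp [contractFstTwo, smul_comm (g a) (f b) c]

variable [Bialgebra R A]

theorem formAct_formAct (g f : A →ₗ[R] R) (b : A) :
    formAct f (formAct g b) = contractFstTwo g f (comul2 (R := R) b) := by
  simp only [formAct_apply, comul2, LinearMap.comp_apply]
  generalize Coalgebra.comul (R := R) b = t
  induction t using TensorProduct.induction_on with
  | zero => simp
  | tmul a c => simp [contractFstTwo]
  | add s t hs ht => simp only [map_add, hs, ht]

/-- The convolution product `b ↦ g(b₍₁₎) f(b₍₂₎)` of two linear forms. -/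
def formConv (g f : A →ₗ[R] R) : A →ₗ[R] R :=
  f.comp (formAct g)

theorem formAct_formConv (g f : A →ₗ[R] R) (b : A) :
    formAct (formConv g f) b = formAct f (formAct g b) := by
  rw [formAct_formAct]
  have h := Coalgebra.coassoc_apply (R := R) b
  have hc : comul2 (R := R) b = TensorProduct.assoc R A A A
      ((Coalgebra.comul (R := R)).rTensor A (Coalgebra.comul (R := R) b)) := h.symm
  rw [hc, formAct_apply]
  generalize Coalgebra.comul (R := R) b = t
  induction t using TensorProduct.induction_on with
  | zero => simp
  | tmul a c =>
    simp only [contractFst_tmul, formConv, LinearMap.comp_apply, LinearMap.rTensor_tmul,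
      formAct_apply]
    generalize Coalgebra.comul (R := R) a = s
    induction s using TensorProduct.induction_on with
    | zero => simp
    | tmul a b => simp [mul_smul]
    | add s t hs ht => simp only [map_add, add_smul, TensorProduct.add_tmul, hs, ht]
  | add s t hs ht => simp only [map_add, hs, ht]

theorem formAct_counit (b : A) : formAct (Coalgebra.counit (R := R)) b = b := by
  simp [formAct, contractFst]

theorem exists_comul_eq_sum_s12 (b : A) :
    ∃ (ι : Type u) (_ : Fintype ι) (b1 b2 : ι → A),
      Coalgebra.comul (R := R) b = ∑ i, b1 i ⊗ₜ[R] b2 i := by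
  let r := Coalgebra.Repr.arbitrary R b
  refine ⟨r.index, inferInstance, fun i => r.left i, fun i => r.right i, ?_⟩
  rw [← r.eq, ← Finset.sum_coe_sort]

theorem exists_comul2_eq_sum_s12 (b : A) :
    ∃ (ι : Type u) (_ : Fintype ι) (b1 b2 b3 : ι → A),
      comul2 (R := R) b = ∑ i, b1 i ⊗ₜ[R] (b2 i ⊗ₜ[R] b3 i) := by
  obtain ⟨ι, _, b1, b2, hb⟩ := exists_comul_eq_sum_s12 (R := R) b
  choose κ hκ c1 c2 hc using fun i => exists_comul_eq_sum_s12 (R := R) (b2 i)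
  refine ⟨Σ i, κ i, inferInstance, fun p => b1 p.1, fun p => c1 p.1 p.2, fun p => c2 p.1 p.2, ?_⟩
  simp [comul2, hb, hc, TensorProduct.tmul_sum, Fintype.sum_sigma]

end LeftAction

section Reindex

variable {R : Type u} [CommRing R] {A : Type u} [Ring A] [Bialgebra R A]
  {ρ ρt : A →ₗ[R] A →ₗ[R] R}

theorem IsDQT.apply_mul (hρ : IsDQT ρ) {ι : Type*} [Fintype ι] {a : A} {a1 a2 : ι → A}
    (ha : Coalgebra.comul (R := R) a = ∑ i, a1 i ⊗ₜ[R] a2 i) (b c : A) :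
    ρ a (b * c) = ∑ i, ρ (a1 i) c * ρ (a2 i) b := by
  obtain ⟨e, he⟩ := Countable.exists_injective_nat ι
  have h := hρ.2.1 a b c (Finset.univ.map ⟨e, he⟩) (Function.extend e a1 0)
    (Function.extend e a2 0)
  simp only [Finset.sum_map, Function.Embedding.coeFn_mk, he.extend_apply] at h
  exact h ha

theorem IsCopConvInv.sum_eq (hρt : IsCopConvInv ρ ρt) {ι κ : Type*} [Fintype ι] [Fintype κ]
    {a b : A} {a1 a2 : ι → A} {b1 b2 : κ → A}
    (ha : Coalgebra.comul (R := R) a = ∑ i, a1 i ⊗ₜ[R] a2 i)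
    (hb : Coalgebra.comul (R := R) b = ∑ j, b1 j ⊗ₜ[R] b2 j) :
    ∑ i, ∑ j, ρt (a1 i) (b2 j) * ρ (a2 i) (b1 j)
      = Coalgebra.counit (R := R) a * Coalgebra.counit (R := R) b := by
  obtain ⟨e, he⟩ := Countable.exists_injective_nat ι
  obtain ⟨d, hd⟩ := Countable.exists_injective_nat κ
  have h := hρt a b (Finset.univ.map ⟨e, he⟩) (Finset.univ.map ⟨d, hd⟩) (Function.extend e a1 0)
    (Function.extend e a2 0) (Function.extend d b1 0) (Function.extend d b2 0)
  simp only [Finset.sum_map, Function.Embedding.coeFn_mk, he.extend_apply, hd.extend_apply] at h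
  exact (h ha hb).1

theorem CovChar.eq_sum {cmul : A → A → A} (hcmul : CovChar ρ ρt cmul) {ι : Type*} [Fintype ι]
    {a : A} {a1 a2 a3 : ι → A}
    (ha : comul2 (R := R) a = ∑ i, a1 i ⊗ₜ[R] (a2 i ⊗ₜ[R] a3 i)) (b : A) :
    cmul a b = ∑ i, a2 i * formAct (ρ (a1 i)) (formAct (ρt (a3 i)) b) := by
  obtain ⟨κ, _, b1, b2, b3, hb⟩ := exists_comul2_eq_sum_s12 (R := R) b
  obtain ⟨e, he⟩ := Countable.exists_injective_nat ι
  obtain ⟨d, hd⟩ := Countable.exists_injective_nat κ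
  have h := hcmul a b (Finset.univ.map ⟨e, he⟩) (Finset.univ.map ⟨d, hd⟩) (Function.extend e a1 0)
    (Function.extend e a2 0) (Function.extend e a3 0) (Function.extend d b1 0)
    (Function.extend d b2 0) (Function.extend d b3 0)
  simp only [Finset.sum_map, Function.Embedding.coeFn_mk, he.extend_apply, hd.extend_apply] at h
  rw [h ha hb]
  simp [formAct_formAct, hb, Finset.mul_sum, mul_smul]

theorem IsDQT.formAct_one {κ : Type*} [DecidableEq κ] {x : κ → κ → A} (hρ : IsDQT ρ)
    (hε : ∀ i j, Coalgebra.counit (R := R) (x i j) = if i = j then (1 : R) else 0) (i j : κ) :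
    formAct (ρ (x i j)) 1 = if i = j then (1 : A) else 0 := by
  simp [formAct_apply, Algebra.TensorProduct.one_def, hρ.2.2.1, hε]

end Reindex

section MatrixCoalgebra

variable {R : Type u} [CommRing R] {A : Type u} [Ring A] [Bialgebra R A]
  {ρ ρt : A →ₗ[R] A →ₗ[R] R} {ι : Type*} [Fintype ι] {x : ι → ι → A}

theorem IsDQT.formAct_mul (hρ : IsDQT ρ)
    (hΔ : ∀ i j, Coalgebra.comul (R := R) (x i j) = ∑ k, x i k ⊗ₜ[R] x k j)
    (i j : ι) (b c : A) :
    formAct (ρ (x i j)) (b * c) = ∑ m, formAct (ρ (x m j)) b * formAct (ρ (x i m)) c := by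
  simp only [formAct_apply, Bialgebra.comul_mul]
  generalize Coalgebra.comul (R := R) b = s
  generalize Coalgebra.comul (R := R) c = t
  induction s using TensorProduct.induction_on with
  | zero => simp
  | add s s' hs hs' => simp only [add_mul, map_add, hs, hs', Finset.sum_add_distrib]
  | tmul b b' =>
    induction t using TensorProduct.induction_on with
    | zero => simp
    | add t t' ht ht' => simp only [mul_add, map_add, ht, ht', Finset.sum_add_distrib]
    | tmul c c' =>
      simp [hρ.apply_mul (hΔ i j), Finset.sum_smul, smul_smul]

theorem comul2_matrix
    (hΔ : ∀ i j, Coalgebra.comul (R := R) (x i j) = ∑ k, x i k ⊗ₜ[R] x k j) (i j : ι) :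
    comul2 (R := R) (x i j) = ∑ p : ι × ι, x i p.1 ⊗ₜ[R] (x p.1 p.2 ⊗ₜ[R] x p.2 j) := by
  simp [comul2, hΔ, TensorProduct.tmul_sum, Fintype.sum_prod_type]

variable [DecidableEq ι]

theorem IsCopConvInv.sum_formAct (hρt : IsCopConvInv ρ ρt)
    (hΔ : ∀ i j, Coalgebra.comul (R := R) (x i j) = ∑ k, x i k ⊗ₜ[R] x k j)
    (hε : ∀ i j, Coalgebra.counit (R := R) (x i j) = if i = j then (1 : R) else 0)
    (i j : ι) (b : A) :
    ∑ m, formAct (ρt (x i m)) (formAct (ρ (x m j)) b) = if i = j then b else 0 := by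
  have h : ∑ m, formConv (ρ (x m j)) (ρt (x i m))
      = (if i = j then (1 : R) else 0) • Coalgebra.counit (R := R) (A := A) := by
    ext c
    obtain ⟨κ, _, c1, c2, hc⟩ := exists_comul_eq_sum_s12 (R := R) c
    have := hρt.sum_eq (hΔ i j) hc
    simp [formConv, formAct_apply, hc, ← hε i j, ← this, mul_comm]
  have hlin : formAct (∑ m, formConv (ρ (x m j)) (ρt (x i m))) b
      = ∑ m, formAct (formConv (ρ (x m j)) (ρt (x i m))) b := by
    simp only [formAct, contractFst, ← LinearMap.coe_rTensorHom, map_sum, LinearMap.comp_apply,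
      LinearMap.sum_apply]
  simp only [← formAct_formConv, ← hlin, h]
  split_ifs <;> simp [formAct_counit]
  simp [formAct, contractFst]

/-- If for fixed `j` the forms `ρ (x i j)` act on `b` by `δ_{ij} c`, then the forms `ρt (x i j)`
act on `b` by `δ_{ij} c⁻¹`. -/
theorem IsCopConvInv.formAct_eq (hρt : IsCopConvInv ρ ρt)
    (hΔ : ∀ i j, Coalgebra.comul (R := R) (x i j) = ∑ k, x i k ⊗ₜ[R] x k j)
    (hε : ∀ i j, Coalgebra.counit (R := R) (x i j) = if i = j then (1 : R) else 0)
    (j : ι) (b : A) (c : Rˣ)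
    (hb : ∀ i, formAct (ρ (x i j)) b = if i = j then (c : R) • b else 0) (i : ι) :
    formAct (ρt (x i j)) b = if i = j then ((c⁻¹ : Rˣ) : R) • b else 0 := by
  have h := hρt.sum_formAct hΔ hε i j b
  rw [Finset.sum_eq_single j (fun m _ hm => by rw [hb, if_neg hm, map_zero]) (by simp), hb,
    if_pos rfl, map_smul] at h
  have hinv := congrArg (((c⁻¹ : Rˣ) : R) • ·) h
  simpa [smul_smul] using hinv

/-- A criterion for `x^k_l ⬝ b` to be a multiple of `x^k_l b`. -/
theorem CovChar.cmul_eq_smul {cmul : A → A → A} (hcmul : CovChar ρ ρt cmul)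
    (hρt : IsCopConvInv ρ ρt)
    (hΔ : ∀ i j, Coalgebra.comul (R := R) (x i j) = ∑ k, x i k ⊗ₜ[R] x k j)
    (hε : ∀ i j, Coalgebra.counit (R := R) (x i j) = if i = j then (1 : R) else 0)
    (k l : ι) (b : A) (c d : Rˣ)
    (hl : ∀ i, formAct (ρ (x i l)) b = if i = l then (c : R) • b else 0)
    (hk : ∀ i, formAct (ρ (x k i)) b = if i = k then (d : R) • b else 0) :
    cmul (x k l) b = ((c⁻¹ * d : Rˣ) : R) • (x k l * b) := by
  rw [hcmul.eq_sum (comul2_matrix hΔ k l), Fintype.sum_prod_type]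
  simp only [hρt.formAct_eq hΔ hε l b c hl, apply_ite, map_zero, map_smul, hk]
  simp [smul_smul]

end MatrixCoalgebra

section OffDiagonal

variable {R : Type u} [CommRing R] {n : ℕ} {qr : Rˣ} {A : Type u} [Ring A] [Bialgebra R A]
  {x : Fin n → Fin n → A} {ρ : A →ₗ[R] A →ₗ[R] R}

theorem formAct_generator
    (hΔ : ∀ i j, Coalgebra.comul (R := R) (x i j) = ∑ k, x i k ⊗ₜ[R] x k j)
    (i j k l : Fin n) :
    formAct (ρ (x i j)) (x k l) = ∑ m, ρ (x i j) (x k m) • x m l := by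
  simp [formAct_apply, hΔ]

theorem formAct_generator_of_lower
    (hΔ : ∀ i j, Coalgebra.comul (R := R) (x i j) = ∑ k, x i k ⊗ₜ[R] x k j)
    (hρx : ∀ i j k l, ρ (x i j) (x k l) = RmatVal n qr i j k l)
    {k l : Fin n} (hkl : k ≠ l) (i : Fin n) :
    formAct (ρ (x i l)) (x k l) = if i = l then ((qr⁻¹ : Rˣ) : R) • x k l else 0 := by
  rw [formAct_generator hΔ, Finset.sum_eq_single k]
  · simp only [hρx, RmatVal]
    split_ifs <;> simp_all
  · intro m _ hm
    simp [hρx, RmatVal, hkl, hm.symm]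
  · simp

theorem formAct_generator_of_upper
    (hΔ : ∀ i j, Coalgebra.comul (R := R) (x i j) = ∑ k, x i k ⊗ₜ[R] x k j)
    (hρx : ∀ i j k l, ρ (x i j) (x k l) = RmatVal n qr i j k l)
    (k l i : Fin n) :
    formAct (ρ (x k i)) (x k l) = if i = k then ((qr⁻¹ * qr ^ n : Rˣ) : R) • x k l else 0 := by
  rw [formAct_generator hΔ, Finset.sum_eq_single k]
  · simp only [hρx, RmatVal]
    by_cases h : i = k
    · simp [h]
    · simp [h, Ne.symm h]
  · intro m _ hm
    simp [hρx, RmatVal, hm.symm]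
  · simp

theorem formAct_pow_of_lower (hρ : IsDQT ρ)
    (hΔ : ∀ i j, Coalgebra.comul (R := R) (x i j) = ∑ k, x i k ⊗ₜ[R] x k j)
    (hε : ∀ i j, Coalgebra.counit (R := R) (x i j) = if i = j then (1 : R) else 0)
    (hρx : ∀ i j k l, ρ (x i j) (x k l) = RmatVal n qr i j k l)
    {k l : Fin n} (hkl : k ≠ l) (N : ℕ) (i : Fin n) :
    formAct (ρ (x i l)) (x k l ^ N) =
      if i = l then (((qr⁻¹) ^ N : Rˣ) : R) • x k l ^ N else 0 := by
  induction N with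
  | zero => simp [hρ.formAct_one hε]
  | succ N ih =>
    rw [pow_succ', hρ.formAct_mul hΔ, Finset.sum_eq_single l]
    · rw [ih, formAct_generator_of_lower hΔ hρx hkl, if_pos rfl]
      split_ifs <;> simp [smul_smul, pow_succ]
    · intro m _ hm
      rw [formAct_generator_of_lower hΔ hρx hkl, if_neg hm, zero_mul]
    · simp

theorem formAct_pow_of_upper (hρ : IsDQT ρ)
    (hΔ : ∀ i j, Coalgebra.comul (R := R) (x i j) = ∑ k, x i k ⊗ₜ[R] x k j)
    (hε : ∀ i j, Coalgebra.counit (R := R) (x i j) = if i = j then (1 : R) else 0)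
    (hρx : ∀ i j k l, ρ (x i j) (x k l) = RmatVal n qr i j k l)
    (k l : Fin n) (N : ℕ) (i : Fin n) :
    formAct (ρ (x k i)) (x k l ^ N) =
      if i = k then (((qr⁻¹ * qr ^ n) ^ N : Rˣ) : R) • x k l ^ N else 0 := by
  induction N with
  | zero => simp [hρ.formAct_one hε, eq_comm]
  | succ N ih =>
    rw [pow_succ, hρ.formAct_mul hΔ, Finset.sum_eq_single k]
    · rw [ih, formAct_generator_of_upper hΔ hρx, if_pos rfl]
      split_ifs <;> simp [smul_smul, pow_succ, mul_comm]
    · intro m _ hm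
      rw [formAct_generator_of_upper hΔ hρx, if_neg hm, mul_zero]
    · simp

end OffDiagonal

theorem cpow_add_two {A : Type u} (cmul : A → A → A) (one a : A) (N : ℕ) :
    cpow cmul one a (N + 2) = cmul a (cpow cmul one a (N + 1)) := rfl

/-- In the common underlying module of `O_q(M_n)` and `B_q(M_n)`, for `k ≠ l` the
powers of the generator `x^k_l` with respect to the original product and with
respect to the covariantized product `⬝` agree up to the scalar `q^{−N(N−1)/2}`:
`(x^k_l)^N = q^{−N(N−1)/2} (x^k_l)^{⬝N}`. -/
theorem offdiag_power_covariantized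
    {R : Type u} [CommRing R] (n : ℕ) (hn : 2 ≤ n) (qr : Rˣ)
    {A : Type u} [Ring A] [Bialgebra R A] (x : Fin n → Fin n → A)
    (hx : OqMnRels n (qr ^ n) x)
    (hxuniv : ∀ (B : Type u) [Ring B] [Algebra R B] (y : Fin n → Fin n → B),
      OqMnRels n (qr ^ n) y → ∃! f : A →ₐ[R] B, ∀ i j, f (x i j) = y i j)
    (hΔ : ∀ i j, Coalgebra.comul (R := R) (x i j) = ∑ k, x i k ⊗ₜ[R] x k j)
    (hε : ∀ i j, Coalgebra.counit (R := R) (x i j) = if i = j then (1 : R) else 0)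
    (ρ : A →ₗ[R] A →ₗ[R] R) (hρ : IsDQT ρ)
    (hρx : ∀ i j k l, ρ (x i j) (x k l) = RmatVal n qr i j k l)
    (ρt : A →ₗ[R] A →ₗ[R] R) (hρt : IsCopConvInv ρ ρt)
    (cmul : A → A → A) (hcmul : CovChar ρ ρt cmul)
    (k l : Fin n) (hkl : k ≠ l) (N : ℕ) :
    x k l ^ N = qzpow (qr ^ n) (-((N * (N - 1) / 2 : ℕ) : ℤ)) • cpow cmul 1 (x k l) N := by
  have hmul : ∀ N : ℕ, cmul (x k l) (x k l ^ N) =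
      (((qr ^ n) ^ N : Rˣ) : R) • x k l ^ (N + 1) := by
    intro N
    rw [hcmul.cmul_eq_smul hρt hΔ hε k l _ _ _ (formAct_pow_of_lower hρ hΔ hε hρx hkl N)
      (formAct_pow_of_upper hρ hΔ hε hρx k l N), pow_succ' (x k l)]
    congr 2
    rw [mul_pow, inv_mul_cancel_left]
  have hsmul : ∀ (r : R) (b : A), cmul (x k l) (r • b) = r • cmul (x k l) b := by
    intro r b
    simp [hcmul.eq_sum (comul2_matrix hΔ k l), Finset.smul_sum]
  have hpow : ∀ N : ℕ, cpow cmul 1 (x k l) N =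
      (((qr ^ n) ^ (N * (N - 1) / 2) : Rˣ) : R) • x k l ^ N := by
    intro N
    induction N with
    | zero => simp [cpow, cListProd]
    | succ N ih =>
      cases N with
      | zero => simp [cpow, cListProd, cchain]
      | succ N =>
        rw [cpow_add_two, ih, hsmul, hmul, smul_smul, ← Units.val_mul, ← pow_add]
        congr 4
        rw [← Finset.sum_range_id_mul_two, ← Finset.sum_range_id_mul_two (N + 1 + 1)]
        simp [Finset.sum_range_succ]
  rw [hpow, smul_smul, qzpow, ← Units.val_mul, zpow_neg, zpow_natCast, inv_mul_cancel,
    Units.val_one, one_smul]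

end
end
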